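/- arXiv:2407.13762 — 4 statements merged into one kernel-verified Lean document; each statement's English description precedes it below -/
import Mathlib

section
/- Fix T > 0 and a > 0. For every continuous θ : [0,T] → 𝒳ₙ, the radial interaction functional Φ^{0,a}_T(θ) is a finite real number and the identity J^a_T(θ) = E_T(θ) − Φ^{0,a}_T(θ) holds in [0,∞] (both sides being ∞ exactly when θ is not absolutely continuous or has infinite Dirichlet energy). -/
open MeasureTheory Filter Set
open scoped Real Topology ENNReal Classical

noncomputable section

/-- The configuration space `𝒳ₙ` of `n` ordered points on (a lift of) the circle:
`θ¹ < θ² < ⋯ < θⁿ < θ¹ + 2π`. -/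
def Xspace (n : ℕ) : Set (Fin n → ℝ) :=
  {x | StrictMono x ∧ ∀ i j : Fin n, x i < x j + 2 * π}

/-- The value `θ^{j+1}`, with the convention `θ^{n+1} = θ¹ + 2π`. -/
def nextVal {n : ℕ} (x : Fin n → ℝ) (j : Fin n) : ℝ :=
  if h : (j : ℕ) + 1 < n then x ⟨(j : ℕ) + 1, h⟩ else x ⟨0, j.pos⟩ + 2 * π

/-- The gap `θ^{j+1} - θ^j` (with wrap-around convention). -/
def gap {n : ℕ} (x : Fin n → ℝ) (j : Fin n) : ℝ := nextVal x j - x j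

/-- The minimal gap `Δ(θ) = min_j (θ^{j+1} - θ^j)`. -/
def minGap {n : ℕ} (x : Fin n → ℝ) : ℝ := ⨅ j : Fin n, gap x j

/-- `d(θ) := max_j |2π/n - (θ^{j+1} - θ^j)|`. -/
def dGap {n : ℕ} (x : Fin n → ℝ) : ℝ := ⨆ j : Fin n, |2 * π / n - gap x j|

/-- `φ^j(θ) = ∑_{k ≠ j} cot((θ^j - θ^k)/2)`. -/
def phi {n : ℕ} (x : Fin n → ℝ) (j : Fin n) : ℝ :=
  ∑ k ∈ Finset.univ.erase j, Real.cot ((x j - x k) / 2)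

/-- `φ_a^j := (a/4) φ^j`. -/
def phiA {n : ℕ} (a : ℝ) (x : Fin n → ℝ) (j : Fin n) : ℝ := a / 4 * phi x j

/-- Absolute continuity of every coordinate of `θ` on `[0, T]`: each component is the
integral of a (locally) integrable function. -/
def AbsCont {n : ℕ} (T : ℝ) (θ : ℝ → Fin n → ℝ) : Prop :=
  ∃ v : ℝ → Fin n → ℝ, (∀ j, IntegrableOn (fun s => v s j) (Icc 0 T)) ∧
    ∀ t ∈ Icc (0 : ℝ) T, ∀ j, θ t j = θ 0 j + ∫ s in (0 : ℝ)..t, v s j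

/-- Truncated multiradial Dirichlet energy `J_T(θ)`. -/
def mEnergy (n : ℕ) (T : ℝ) (θ : ℝ → Fin n → ℝ) : ℝ≥0∞ :=
  if AbsCont T θ then
    ENNReal.ofReal (1 / 2) *
      ∫⁻ s in Ioc (0 : ℝ) T,
        ENNReal.ofReal (∑ j, (deriv (fun t => θ t j) s - 2 * phi (θ s) j) ^ 2)
  else ⊤

/-- Multiradial Dirichlet energy `J(θ) = lim_{T→∞} J_T(θ)`, the supremum of the
nondecreasing family `J_T(θ)`. -/
def mEnergyInf (n : ℕ) (θ : ℝ → Fin n → ℝ) : ℝ≥0∞ := ⨆ T : ℝ, mEnergy n T θ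

/-- Truncated multiradial Dirichlet energy with parameter `a`, `J^a_T(θ)`. -/
def mEnergyA (n : ℕ) (a T : ℝ) (θ : ℝ → Fin n → ℝ) : ℝ≥0∞ :=
  if AbsCont T θ then
    ENNReal.ofReal (1 / 2) *
      ∫⁻ s in Ioc (0 : ℝ) T,
        ENNReal.ofReal (∑ j, (deriv (fun t => θ t j) s - 2 * phiA a (θ s) j) ^ 2)
  else ⊤

/-- `J^a(θ) = lim_{T→∞} J^a_T(θ)` (supremum of the nondecreasing family). -/
def mEnergyAInf (n : ℕ) (a : ℝ) (θ : ℝ → Fin n → ℝ) : ℝ≥0∞ := ⨆ T : ℝ, mEnergyA n a T θ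

/-- Truncated Dirichlet energy `E_T(θ)`. -/
def dEnergy (n : ℕ) (T : ℝ) (θ : ℝ → Fin n → ℝ) : ℝ≥0∞ :=
  if AbsCont T θ then
    ENNReal.ofReal (1 / 2) *
      ∫⁻ s in Ioc (0 : ℝ) T, ENNReal.ofReal (∑ j, deriv (fun t => θ t j) s ^ 2)
  else ⊤

/-- `E(θ) = lim_{T→∞} E_T(θ)` (supremum of the nondecreasing family). -/
def dEnergyInf (n : ℕ) (θ : ℝ → Fin n → ℝ) : ℝ≥0∞ := ⨆ T : ℝ, dEnergy n T θ

/-- `F(θ) := ∏_{j<k} |sin((θ^k - θ^j)/2)|`. -/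
def Fprod {n : ℕ} (x : Fin n → ℝ) : ℝ :=
  ∏ j : Fin n, ∏ k ∈ Finset.univ.filter (fun k => j < k), |Real.sin ((x k - x j) / 2)|

/-- `G_a(θ) := -a log F(θ)`. -/
def Ga {n : ℕ} (a : ℝ) (x : Fin n → ℝ) : ℝ := -(a * Real.log (Fprod x))

/-- `ψ(θ) := ∑_j ∑_{k≠j} csc²((θ^j - θ^k)/2)`. -/
def psi {n : ℕ} (x : Fin n → ℝ) : ℝ :=
  ∑ j : Fin n, ∑ k ∈ Finset.univ.erase j, (Real.sin ((x j - x k) / 2))⁻¹ ^ 2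

/-- `ψ_a := (a/4) ψ`. -/
def psiA {n : ℕ} (a : ℝ) (x : Fin n → ℝ) : ℝ := a / 4 * psi x

/-- The radial interaction functional `Φ^{κ,a}_T(θ)`. -/
def PhiK {n : ℕ} (κ a T : ℝ) (θ : ℝ → Fin n → ℝ) : ℝ :=
  Ga a (θ 0) - Ga a (θ T) +
    (1 / 2) * ∫ s in (0 : ℝ)..T, (κ * psiA a (θ s) - ∑ j, (2 * phiA a (θ s) j) ^ 2)

/-- A function whose increments on `uIcc a b` are dominated by a multiple of those of an absolutely
continuous function is absolutely continuous. -/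
theorem AbsolutelyContinuousOnInterval.of_dist_le {X Y : Type*} [PseudoMetricSpace X]
    [PseudoMetricSpace Y] {f : ℝ → X} {g : ℝ → Y} {a b K : ℝ}
    (hf : AbsolutelyContinuousOnInterval f a b)
    (hfg : ∀ x ∈ uIcc a b, ∀ y ∈ uIcc a b, dist (g x) (g y) ≤ K * dist (f x) (f y)) :
    AbsolutelyContinuousOnInterval g a b := by
  refine squeeze_zero' (Eventually.of_forall fun E => Finset.sum_nonneg fun _ _ => dist_nonneg) ?_
    (by simpa using Filter.Tendsto.const_mul K hf)
  refine eventually_inf_principal.2 (Eventually.of_forall fun E hE => ?_)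
  rw [Finset.mul_sum]
  exact Finset.sum_le_sum fun i hi => hfg _ (hE.1 i hi).1 _ (hE.1 i hi).2

/-- A `C¹` function of an absolutely continuous real function is absolutely continuous. -/
theorem ContDiffOn.comp_absolutelyContinuousOnInterval {f u : ℝ → ℝ} {a b : ℝ}
    (hf : ContDiffOn ℝ 1 f (u '' uIcc a b)) (hu : AbsolutelyContinuousOnInterval u a b) :
    AbsolutelyContinuousOnInterval (fun t => f (u t)) a b := by
  have hconv : Convex ℝ (u '' uIcc a b) :=
    (isPreconnected_uIcc.image u hu.continuousOn).ordConnected.convex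
  obtain ⟨K, hK⟩ := hf.exists_lipschitzOnWith (by decide) hconv
    (isCompact_uIcc.image_of_continuousOn hu.continuousOn)
  exact hu.of_dist_le fun x hx y hy =>
    hK.dist_le_mul _ (mem_image_of_mem u hx) _ (mem_image_of_mem u hy)

theorem AbsolutelyContinuousOnInterval.fun_sum {ι : Type*} (s : Finset ι) {f : ι → ℝ → ℝ}
    {a b : ℝ} (hf : ∀ i ∈ s, AbsolutelyContinuousOnInterval (f i) a b) :
    AbsolutelyContinuousOnInterval (fun t => ∑ i ∈ s, f i t) a b := by
  classical
  induction s using Finset.induction_on with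
  | empty =>
    simpa using (LipschitzWith.const (0 : ℝ)).lipschitzOnWith.absolutelyContinuousOnInterval
  | insert i s hi ih =>
    simp only [Finset.sum_insert hi]
    exact (hf i (Finset.mem_insert_self i s)).fun_add
      (ih fun k hk => hf k (Finset.mem_insert_of_mem hk))

/-- The components of an `AbsCont` curve are absolutely continuous in the `ε`-`δ` sense. -/
theorem AbsCont.absolutelyContinuousOnInterval {n : ℕ} {T : ℝ} (hT : 0 ≤ T)
    {θ : ℝ → Fin n → ℝ} (h : AbsCont T θ) (j : Fin n) :
    AbsolutelyContinuousOnInterval (fun t => θ t j) 0 T := by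
  obtain ⟨v, hv, hθ⟩ := h
  have hint : IntervalIntegrable (fun s => v s j) volume 0 T :=
    (intervalIntegrable_iff_integrableOn_Icc_of_le hT).2 (hv j)
  refine (hint.absolutelyContinuousOnInterval_intervalIntegral
    (left_mem_uIcc)).of_dist_le (K := 1) fun x hx y hy => ?_
  rw [uIcc_of_le hT] at hx hy
  simp [hθ x hx j, hθ y hy j]

theorem sin_half_sub_pos_of_mem_Xspace {n : ℕ} {x : Fin n → ℝ} (hx : x ∈ Xspace n) {j k : Fin n}
    (hjk : j < k) : 0 < Real.sin ((x k - x j) / 2) := by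
  have h₁ := hx.1 hjk
  have h₂ := hx.2 k j
  exact Real.sin_pos_of_pos_of_lt_pi (by linarith) (by linarith)

theorem sin_half_sub_ne_zero_of_mem_Xspace {n : ℕ} {x : Fin n → ℝ} (hx : x ∈ Xspace n)
    {j k : Fin n} (hjk : j ≠ k) : Real.sin ((x k - x j) / 2) ≠ 0 := by
  rcases hjk.lt_or_gt with h | h
  · exact (sin_half_sub_pos_of_mem_Xspace hx h).ne'
  · rw [← neg_sub, neg_div, Real.sin_neg]
    exact neg_ne_zero.2 (sin_half_sub_pos_of_mem_Xspace hx h).ne'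

theorem continuousOn_phi {n : ℕ} (j : Fin n) : ContinuousOn (fun x => phi x j) (Xspace n) := by
  unfold phi
  refine continuousOn_finsetSum _ fun k hk => ?_
  simp only [Real.cot_eq_cos_div_sin]
  refine ContinuousOn.div (by fun_prop) (by fun_prop) fun x hx => ?_
  exact sin_half_sub_ne_zero_of_mem_Xspace hx (Finset.ne_of_mem_erase hk)

theorem log_Fprod {n : ℕ} {x : Fin n → ℝ} (hx : x ∈ Xspace n) :
    Real.log (Fprod x) = ∑ j : Fin n, ∑ k ∈ Finset.univ.filter (fun k => j < k),
      Real.log (Real.sin ((x k - x j) / 2)) := by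
  have hpos : ∀ j k : Fin n, k ∈ Finset.univ.filter (fun k => j < k) →
      |Real.sin ((x k - x j) / 2)| ≠ 0 := fun j k hk =>
    abs_ne_zero.2 (sin_half_sub_pos_of_mem_Xspace hx (Finset.mem_filter.1 hk).2).ne'
  unfold Fprod
  rw [Real.log_prod fun j _ => Finset.prod_ne_zero_iff.2 (hpos j)]
  refine Finset.sum_congr rfl fun j _ => ?_
  rw [Real.log_prod (hpos j)]
  simp only [Real.log_abs]

/-- Summation by pairs of an antisymmetric kernel `c`. -/
theorem sum_lt_mul_sub_eq_sum_erase {n : ℕ} (c : Fin n → Fin n → ℝ) (hc : ∀ j k, c j k = -c k j)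
    (d : Fin n → ℝ) :
    ∑ j : Fin n, ∑ k ∈ Finset.univ.filter (fun k => j < k), c k j * (d k - d j) =
      ∑ j : Fin n, (∑ k ∈ Finset.univ.erase j, c j k) * d j := by
  have hsplit : ∀ j : Fin n, (∑ k ∈ Finset.univ.erase j, c j k) * d j =
      (∑ k, if k < j then c j k * d j else 0) + ∑ k, if j < k then c j k * d j else 0 := by
    intro j
    rw [← Finset.filter_ne', Finset.sum_filter, Finset.sum_mul, ← Finset.sum_add_distrib]
    refine Finset.sum_congr rfl fun k _ => ?_
    rcases lt_trichotomy j k with h | h | h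
    · simp [h, h.ne', h.not_gt]
    · simp [h]
    · simp [h, h.ne, h.not_gt]
  simp only [hsplit, Finset.sum_add_distrib, Finset.sum_filter]
  rw [Finset.sum_comm (f := fun j k => if k < j then c j k * d j else 0),
    ← Finset.sum_add_distrib]
  refine Finset.sum_congr rfl fun j _ => ?_
  rw [← Finset.sum_add_distrib]
  refine Finset.sum_congr rfl fun k _ => ?_
  split_ifs
  · rw [hc j k]; ring
  · simp

/-- Along an absolutely continuous curve in `Xspace n`, the logarithm of `Fprod` is the integral of
its gradient against the velocity. -/
theorem integral_phi_mul_deriv {n : ℕ} {T : ℝ} (hT : 0 ≤ T) {θ : ℝ → Fin n → ℝ}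
    (hX : ∀ t ∈ Icc (0 : ℝ) T, θ t ∈ Xspace n)
    (hac : ∀ j, AbsolutelyContinuousOnInterval (fun t => θ t j) 0 T) :
    ∫ s in (0 : ℝ)..T, ∑ j, phi (θ s) j * deriv (fun t => θ t j) s =
      2 * (Real.log (Fprod (θ T)) - Real.log (Fprod (θ 0))) := by
  let L : ℝ → ℝ := fun t => ∑ j : Fin n, ∑ k ∈ Finset.univ.filter (fun k => j < k),
    Real.log (Real.sin ((θ t k - θ t j) / 2))
  have hL : AbsolutelyContinuousOnInterval L 0 T := by
    refine .fun_sum _ fun j _ => .fun_sum _ fun k hk => ?_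
    have hf : ContDiffOn ℝ 1 (fun u : ℝ => Real.log (Real.sin (u / 2)))
        ((fun t => θ t k - θ t j) '' uIcc 0 T) := by
      refine ContDiffOn.log (by fun_prop) ?_
      rintro _ ⟨t, ht, rfl⟩
      rw [uIcc_of_le hT] at ht
      exact (sin_half_sub_pos_of_mem_Xspace (hX t ht) (Finset.mem_filter.1 hk).2).ne'
    exact hf.comp_absolutelyContinuousOnInterval ((hac k).fun_sub (hac j))
  rw [log_Fprod (hX T (right_mem_Icc.2 hT)), log_Fprod (hX 0 (left_mem_Icc.2 hT)),
    ← hL.integral_deriv_eq_sub, ← intervalIntegral.integral_const_mul]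
  refine intervalIntegral.integral_congr_ae ?_
  have hdiff : ∀ᵐ s : ℝ, ∀ j, s ∈ uIcc 0 T → DifferentiableAt ℝ (fun t => θ t j) s :=
    ae_all_iff.2 fun j => (hac j).ae_differentiableAt
  filter_upwards [hdiff] with s hs hsT
  have hs' : s ∈ uIcc 0 T := uIoc_subset_uIcc hsT
  have hsX : θ s ∈ Xspace n := hX s (by rwa [uIcc_of_le hT] at hs')
  have hderiv : HasDerivAt L (∑ j : Fin n, ∑ k ∈ Finset.univ.filter (fun k => j < k),
      Real.cot ((θ s k - θ s j) / 2) *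
        (deriv (fun t => θ t k) s / 2 - deriv (fun t => θ t j) s / 2)) s := by
    refine HasDerivAt.fun_sum fun j _ => HasDerivAt.fun_sum fun k hk => ?_
    have hne := (sin_half_sub_pos_of_mem_Xspace hsX (Finset.mem_filter.1 hk).2).ne'
    have h := ((((hs k hs').hasDerivAt.fun_sub (hs j hs').hasDerivAt).div_const 2).sin).log hne
    refine h.congr_deriv ?_
    rw [Real.cot_eq_cos_div_sin]
    ring
  rw [hderiv.deriv, sum_lt_mul_sub_eq_sum_erase
    (fun k j => Real.cot ((θ s k - θ s j) / 2)) _ (fun j => deriv (fun t => θ t j) s / 2),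
    Finset.mul_sum]
  · refine Finset.sum_congr rfl fun j _ => ?_
    unfold phi
    ring
  · intro j k
    rw [← neg_sub, neg_div, Real.cot_eq_cos_div_sin, Real.cot_eq_cos_div_sin, Real.cos_neg,
      Real.sin_neg, div_neg]

theorem lintegral_ofReal_ne_top_iff_integrable {α : Type*} [MeasurableSpace α] {μ : Measure α}
    {f : α → ℝ} (hfm : AEStronglyMeasurable f μ) (hf : ∀ x, 0 ≤ f x) :
    ∫⁻ x, ENNReal.ofReal (f x) ∂μ ≠ ⊤ ↔ Integrable f μ := by
  rw [Integrable, hasFiniteIntegral_iff_ofReal (Eventually.of_forall hf), lt_top_iff_ne_top]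
  simp [hfm]


/-- For continuous `θ : [0,T] → 𝒳ₙ`, the interaction functional
`Φ^{0,a}_T(θ)` is a genuine (finite) real quantity — its integrand is integrable —
and `J^a_T(θ) = E_T(θ) - Φ^{0,a}_T(θ)` holds in `[0,∞]`: both sides are infinite
simultaneously, and when finite their real values satisfy the identity. -/
theorem multiradial_energy_decomposition
    (n : ℕ) (hn : 1 ≤ n) (T a : ℝ) (hT : 0 < T) (ha : 0 < a)
    (θ : ℝ → Fin n → ℝ)
    (hcont : ContinuousOn θ (Icc 0 T))
    (hX : ∀ t ∈ Icc (0 : ℝ) T, θ t ∈ Xspace n) :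
    IntervalIntegrable (fun s => ∑ j, (2 * phiA a (θ s) j) ^ 2) volume 0 T ∧
    (mEnergyA n a T θ = ⊤ ↔ dEnergy n T θ = ⊤) ∧
    (mEnergyA n a T θ ≠ ⊤ →
      (mEnergyA n a T θ).toReal = (dEnergy n T θ).toReal - PhiK 0 a T θ) := by
  have hphi : ∀ j, ContinuousOn (fun s => 2 * phiA a (θ s) j) (uIcc 0 T) := fun j => by
    rw [uIcc_of_le hT.le]
    exact (((continuousOn_phi j).comp hcont hX).const_mul (a / 4)).const_mul 2
  have hB : IntervalIntegrable (fun s => ∑ j, (2 * phiA a (θ s) j) ^ 2) volume 0 T :=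
    (continuousOn_finsetSum _ fun j _ => (hphi j).pow 2).intervalIntegrable
  refine ⟨hB, ?_⟩
  by_cases hAC : AbsCont T θ
  swap
  · simp [mEnergyA, dEnergy, hAC]
  have hac := hAC.absolutelyContinuousOnInterval hT.le
  let d : Fin n → ℝ → ℝ := fun j => deriv fun t => θ t j
  have hC : IntervalIntegrable (fun s => ∑ j, 2 * phiA a (θ s) j * d j s) volume 0 T := by
    simpa [Finset.sum_fn] using IntervalIntegrable.sum Finset.univ fun j _ =>
      (hac j).intervalIntegrable_deriv.continuousOn_mul (hphi j)
  have hCint : ∫ s in (0 : ℝ)..T, ∑ j, 2 * phiA a (θ s) j * d j s =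
      Ga a (θ 0) - Ga a (θ T) := by
    have hCeq : ∀ s, ∑ j, 2 * phiA a (θ s) j * d j s = a / 2 * ∑ j, phi (θ s) j * d j s := by
      intro s
      rw [Finset.mul_sum]
      exact Finset.sum_congr rfl fun j _ => by unfold phiA; ring
    simp only [hCeq, intervalIntegral.integral_const_mul]
    rw [integral_phi_mul_deriv hT.le hX hac]
    unfold Ga
    ring
  have hexpand : ∀ s, ∑ j, (d j s - 2 * phiA a (θ s) j) ^ 2 =
      ∑ j, d j s ^ 2 - 2 * ∑ j, 2 * phiA a (θ s) j * d j s +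
        ∑ j, (2 * phiA a (θ s) j) ^ 2 := by
    intro s
    rw [Finset.mul_sum, ← Finset.sum_sub_distrib, ← Finset.sum_add_distrib]
    exact Finset.sum_congr rfl fun j _ => by ring
  have hAm : AEStronglyMeasurable (fun s => ∑ j, d j s ^ 2) (volume.restrict (Ioc 0 T)) :=
    (Finset.measurable_fun_sum _ fun j _ =>
      (measurable_deriv fun t => θ t j).pow_const 2).aestronglyMeasurable
  have hB' := (intervalIntegrable_iff_integrableOn_Ioc_of_le hT.le).1 hB
  have hC' := (intervalIntegrable_iff_integrableOn_Ioc_of_le hT.le).1 hC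
  have hM : AEStronglyMeasurable (fun s => ∑ j, (d j s - 2 * phiA a (θ s) j) ^ 2)
      (volume.restrict (Ioc 0 T)) := by
    simp only [hexpand]
    exact (hAm.sub (hC'.1.const_mul 2)).add hB'.1
  have hiff : IntegrableOn (fun s => ∑ j, (d j s - 2 * phiA a (θ s) j) ^ 2) (Ioc 0 T) ↔
      IntegrableOn (fun s => ∑ j, d j s ^ 2) (Ioc 0 T) := by
    simp only [hexpand]
    refine ⟨fun h => ?_, fun h => (h.sub (hC'.const_mul 2)).add hB'⟩
    refine ((h.sub hB').add (hC'.const_mul 2)).congr (Eventually.of_forall fun s => ?_)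
    simp
  have hMtop := lintegral_ofReal_ne_top_iff_integrable hM fun s =>
    Finset.sum_nonneg fun j _ => sq_nonneg _
  have hAtop := lintegral_ofReal_ne_top_iff_integrable hAm fun s =>
    Finset.sum_nonneg fun j _ => sq_nonneg _
  have hhalf : ∀ x : ℝ≥0∞, ENNReal.ofReal (1 / 2) * x = ⊤ ↔ x = ⊤ := fun x => by
    simp [ENNReal.mul_eq_top]
  simp only [mEnergyA, dEnergy, hAC, if_true, hhalf, ne_eq]
  have htop := hMtop.trans (hiff.trans hAtop.symm)
  refine ⟨not_iff_not.1 htop, fun hfin => ?_⟩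
  have hA' : IntegrableOn (fun s => ∑ j, d j s ^ 2) (Ioc 0 T) := hiff.1 (hMtop.1 hfin)
  have hA := (intervalIntegrable_iff_integrableOn_Ioc_of_le hT.le).2 hA'
  rw [ENNReal.toReal_mul, ENNReal.toReal_mul, ENNReal.toReal_ofReal (by norm_num),
    ← integral_eq_lintegral_of_nonneg_ae
      (Eventually.of_forall fun s => Finset.sum_nonneg fun j _ => sq_nonneg _) hM,
    ← integral_eq_lintegral_of_nonneg_ae
      (Eventually.of_forall fun s => Finset.sum_nonneg fun j _ => sq_nonneg _) hAm,
    ← intervalIntegral.integral_of_le hT.le, ← intervalIntegral.integral_of_le hT.le]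
  simp only [hexpand]
  rw [intervalIntegral.integral_add (hA.sub (hC.const_mul 2)) hB,
    intervalIntegral.integral_sub hA (hC.const_mul 2), intervalIntegral.integral_const_mul, hCint]
  simp only [PhiK, zero_mul, zero_sub, intervalIntegral.integral_neg]
  ring

end
end

section
/- Fix T > 0, a > 0 and θ₀ ∈ 𝒳ₙ. On the space C_{θ₀}([0,T], 𝒳ₙ) of continuous functions θ : [0,T] → 𝒳ₙ with θ_0 = θ₀, equipped with the supremum metric d(θ,ω) := sup_{t∈[0,T]} |θ_t − ω_t| (Euclidean norm on ℝⁿ), the multiradial Dirichlet energy J^a_T is a good rate function: for every c ≥ 0, the sublevel set {θ ∈ C_{θ₀}([0,T], 𝒳ₙ) : J^a_T(θ) ≤ c} is compact; in particular J^a_T is lower semicontinuous. -/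
open MeasureTheory Filter Set
open scoped Real Topology ENNReal Classical

noncomputable section

/-- Post-composition with a Lipschitz function preserves absolute continuity. -/
lemma LipschitzOnWith.comp_absolutelyContinuousOnInterval {f g : ℝ → ℝ} {K : NNReal} {s : Set ℝ}
    {a b : ℝ} (hg : LipschitzOnWith K g s) (hf : AbsolutelyContinuousOnInterval f a b)
    (hs : MapsTo f (uIcc a b) s) :
    AbsolutelyContinuousOnInterval (fun t => g (f t)) a b := by
  rw [absolutelyContinuousOnInterval_iff] at hf ⊢
  intro ε hε
  obtain ⟨δ, hδ, h⟩ := hf (ε / (K + 1)) (by positivity)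
  refine ⟨δ, hδ, fun E hE hsum => ?_⟩
  have h1 := h E hE hsum
  rw [lt_div_iff₀ (by positivity)] at h1
  refine lt_of_le_of_lt ?_ h1
  rw [Finset.sum_mul]
  refine Finset.sum_le_sum fun i hi => ?_
  have hmem := hE.1 i hi
  have h2 := hg.dist_le_mul _ (hs hmem.1) _ (hs hmem.2)
  have h3 : 0 ≤ dist (f (E.2 i).1) (f (E.2 i).2) := dist_nonneg
  linarith

/-- A primitive is almost everywhere differentiable, with the expected derivative. -/
lemma ae_hasDerivAt_of_eq_integral {T : ℝ} {x v : ℝ → ℝ} (hv : IntegrableOn v (Icc 0 T))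
    (hx : ∀ t ∈ Icc (0 : ℝ) T, x t = x 0 + ∫ s in (0 : ℝ)..t, v s) :
    ∀ᵐ s, s ∈ Ioo 0 T → HasDerivAt x (v s) s := by
  rcases lt_or_ge T 0 with hT | hT
  · exact Eventually.of_forall fun s hs => absurd (hs.1.trans hs.2) (not_lt.2 hT.le)
  have hi : IntervalIntegrable v volume 0 T :=
    (intervalIntegrable_iff_integrableOn_Icc_of_le hT).2 hv
  filter_upwards [hi.ae_hasDerivAt_integral] with s hs hmem
  rw [uIcc_of_le hT] at hs
  have h := (hs (Ioo_subset_Icc_self hmem) 0 (left_mem_Icc.2 hT)).const_add (x 0)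
  refine h.congr_of_eventuallyEq ?_
  filter_upwards [Icc_mem_nhds hmem.1 hmem.2] with t ht using hx t ht

lemma absolutelyContinuousOnInterval_of_eq_integral {T : ℝ} (hT : 0 ≤ T) {x v : ℝ → ℝ}
    (hv : IntegrableOn v (Icc 0 T))
    (hx : ∀ t ∈ Icc (0 : ℝ) T, x t = x 0 + ∫ s in (0 : ℝ)..t, v s) :
    AbsolutelyContinuousOnInterval x 0 T := by
  have hi : IntervalIntegrable v volume 0 T :=
    (intervalIntegrable_iff_integrableOn_Icc_of_le hT).2 hv
  have h := hi.absolutelyContinuousOnInterval_intervalIntegral (c := 0) (by simp)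
  rw [absolutelyContinuousOnInterval_iff] at h ⊢
  intro ε hε
  obtain ⟨δ, hδ, h⟩ := h ε hε
  refine ⟨δ, hδ, fun E hE hsum => lt_of_le_of_lt (le_of_eq ?_) (h E hE hsum)⟩
  refine Finset.sum_congr rfl fun i hi => ?_
  have hmem := hE.1 i hi
  rw [uIcc_of_le hT] at hmem
  rw [hx _ hmem.1, hx _ hmem.2, dist_add_left]

/-- Chain rule for a `C¹` function along a primitive. -/
lemma sub_eq_integral_deriv_comp_mul {T : ℝ} {x v g : ℝ → ℝ}
    (hv : IntegrableOn v (Icc 0 T))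
    (hx : ∀ t ∈ Icc (0 : ℝ) T, x t = x 0 + ∫ s in (0 : ℝ)..t, v s)
    (hg : ∀ t ∈ Icc (0 : ℝ) T, ContDiffAt ℝ 1 g (x t)) {t : ℝ} (ht : t ∈ Icc 0 T) :
    g (x t) - g (x 0) = ∫ s in (0 : ℝ)..t, deriv g (x s) * v s := by
  have hsub : Icc 0 t ⊆ Icc 0 T := Icc_subset_Icc_right ht.2
  have hac := absolutelyContinuousOnInterval_of_eq_integral ht.1 (hv.mono_set hsub)
    (fun s hs => hx s (hsub hs))
  have hcont : ContinuousOn x (Icc 0 t) := by simpa [uIcc_of_le ht.1] using hac.continuousOn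
  have hlip : LocallyLipschitzOn (x '' Icc 0 t) g := by
    rintro _ ⟨s, hs, rfl⟩
    obtain ⟨K, u, hu, h⟩ := (hg s (hsub hs)).exists_lipschitzOnWith
    exact ⟨K, u, mem_nhdsWithin_of_mem_nhds hu, h⟩
  obtain ⟨K, hK⟩ := hlip.exists_lipschitzOnWith_of_compact (isCompact_Icc.image_of_continuousOn hcont)
  have hgx := hK.comp_absolutelyContinuousOnInterval hac
    (by rw [uIcc_of_le ht.1]; exact mapsTo_image _ _)
  rw [← hgx.integral_deriv_eq_sub]
  refine intervalIntegral.integral_congr_ae ?_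
  have hne : ∀ᵐ s : ℝ, s ≠ t := by simp [ae_iff, measure_singleton]
  filter_upwards [ae_hasDerivAt_of_eq_integral hv hx, hne] with s hs hst hmem
  rw [uIoc_of_le ht.1] at hmem
  have hs' : s ∈ Ioo 0 T := ⟨hmem.1, (lt_of_le_of_ne hmem.2 hst).trans_le ht.2⟩
  have h1 := ((hg s (Ioo_subset_Icc_self hs')).differentiableAt (by simp)).hasDerivAt
  exact (h1.comp s (hs hs')).deriv

/-- The Coulomb potential `-(a/2) ∑_{j,k} log |sin((θ^j - θ^k)/2)|`; the diagonal terms vanish. -/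
def coulombPotential {n : ℕ} (a : ℝ) (x : Fin n → ℝ) : ℝ :=
  -(a / 2) * ∑ j, ∑ k, Real.log (Real.sin ((x j - x k) / 2))

lemma sin_half_sub_ne_zero {n : ℕ} {x : Fin n → ℝ} (hx : x ∈ Xspace n) {j k : Fin n}
    (hjk : j ≠ k) : Real.sin ((x j - x k) / 2) ≠ 0 := by
  have h1 := hx.2 j k
  have h2 := hx.2 k j
  have h3 := sub_ne_zero.2 (hx.1.injective.ne hjk)
  intro h
  have := (Real.sin_eq_zero_iff_of_lt_of_lt (by linarith) (by linarith)).1 h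
  exact h3 (by linarith)

lemma log_sin_nonpos (u : ℝ) : Real.log (Real.sin u) ≤ 0 := by
  rw [← Real.log_abs]
  exact Real.log_nonpos (abs_nonneg _) (Real.abs_sin_le_one u)

lemma coulombPotential_nonneg {n : ℕ} {a : ℝ} (ha : 0 ≤ a) (x : Fin n → ℝ) :
    0 ≤ coulombPotential a x := by
  rw [coulombPotential]
  exact mul_nonneg_of_nonpos_of_nonpos (by linarith)
    (Finset.sum_nonpos fun j _ => Finset.sum_nonpos fun k _ => log_sin_nonpos _)

lemma exp_le_abs_sin_half_sub {n : ℕ} {a M : ℝ} (ha : 0 < a) {x : Fin n → ℝ}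
    (hx : x ∈ Xspace n) (hM : coulombPotential a x ≤ M) {j k : Fin n} (hjk : j ≠ k) :
    Real.exp (-(2 * M / a)) ≤ |Real.sin ((x j - x k) / 2)| := by
  rw [← Real.le_log_iff_exp_le (abs_pos.2 (sin_half_sub_ne_zero hx hjk)), Real.log_abs]
  have h1 : ∑ j, ∑ k, Real.log (Real.sin ((x j - x k) / 2)) ≤
      Real.log (Real.sin ((x j - x k) / 2)) := by
    have h2 : ∀ i l : Fin n, 0 ≤ -Real.log (Real.sin ((x i - x l) / 2)) := fun i l => by
      linarith [log_sin_nonpos ((x i - x l) / 2)]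
    have h3 := Finset.single_le_sum (f := fun i => ∑ l, -Real.log (Real.sin ((x i - x l) / 2)))
      (fun i _ => Finset.sum_nonneg fun l _ => h2 i l) (Finset.mem_univ j)
    have h4 := Finset.single_le_sum (f := fun l => -Real.log (Real.sin ((x j - x l) / 2)))
      (fun l _ => h2 j l) (Finset.mem_univ k)
    simp only [Finset.sum_neg_distrib] at h3 h4
    linarith
  rw [coulombPotential] at hM
  rw [neg_le, le_div_iff₀ ha] at *
  nlinarith

lemma abs_phi_le {n : ℕ} {x : Fin n → ℝ} {ε : ℝ} (hε : 0 < ε)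
    (h : ∀ j k : Fin n, j ≠ k → ε ≤ |Real.sin ((x j - x k) / 2)|) (j : Fin n) :
    |phi x j| ≤ n * ε⁻¹ := by
  have h1 : ∀ k ∈ Finset.univ.erase j, |Real.cot ((x j - x k) / 2)| ≤ ε⁻¹ := fun k hk => by
    have h2 := h j k (Finset.ne_of_mem_erase hk).symm
    rw [Real.cot_eq_cos_div_sin, abs_div, div_eq_mul_inv]
    calc _ ≤ 1 * ε⁻¹ := mul_le_mul (Real.abs_cos_le_one _) (inv_anti₀ hε h2) (by positivity) zero_le_one
      _ = ε⁻¹ := one_mul _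
  calc |phi x j| ≤ ∑ k ∈ Finset.univ.erase j, |Real.cot ((x j - x k) / 2)| :=
        Finset.abs_sum_le_sum_abs _ _
    _ ≤ (Finset.univ.erase j).card • ε⁻¹ := Finset.sum_le_card_nsmul _ _ _ h1
    _ ≤ n * ε⁻¹ := by
        rw [nsmul_eq_mul]
        gcongr
        exact (Finset.card_le_univ _).trans (by simp)

lemma continuousAt_phiA {n : ℕ} (a : ℝ) {x : Fin n → ℝ} (hx : x ∈ Xspace n) (j : Fin n) :
    ContinuousAt (fun y : Fin n → ℝ => phiA a y j) x := by
  simp only [phiA, phi, Real.cot_eq_cos_div_sin]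
  refine continuousAt_const.mul (tendsto_finsetSum _ fun k hk => ?_)
  exact ContinuousAt.div (by fun_prop) (by fun_prop)
    (sin_half_sub_ne_zero hx (Finset.ne_of_mem_erase hk).symm)

/-- A limit of configurations whose points stay separated is a configuration. -/
lemma mem_Xspace_of_tendsto {n : ℕ} {ε : ℝ} (hε : 0 < ε) {y : ℕ → Fin n → ℝ} {x : Fin n → ℝ}
    (hy : ∀ i, y i ∈ Xspace n)
    (hsin : ∀ i, ∀ j k : Fin n, j ≠ k → ε ≤ |Real.sin ((y i j - y i k) / 2)|)
    (hlim : ∀ j, Tendsto (fun i => y i j) atTop (𝓝 (x j))) : x ∈ Xspace n := by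
  have hne : ∀ j k : Fin n, j ≠ k → Real.sin ((x j - x k) / 2) ≠ 0 := fun j k hjk => by
    have h1 : Tendsto (fun i => |Real.sin ((y i j - y i k) / 2)|) atTop
        (𝓝 |Real.sin ((x j - x k) / 2)|) :=
      ((Real.continuous_sin.tendsto _).comp (((hlim j).sub (hlim k)).div_const 2)).abs
    exact abs_pos.1 (hε.trans_le (ge_of_tendsto' h1 fun i => hsin i j k hjk))
  refine ⟨fun j k hjk => ?_, fun j k => ?_⟩
  · have h1 : x j ≤ x k := le_of_tendsto_of_tendsto' (hlim j) (hlim k)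
      fun i => ((hy i).1 hjk).le
    refine lt_of_le_of_ne h1 fun h => hne j k hjk.ne ?_
    simp [h]
  · by_cases hjk : j = k
    · subst hjk
      linarith [Real.pi_pos]
    have h1 : x j ≤ x k + 2 * π := le_of_tendsto_of_tendsto' (hlim j)
      ((hlim k).add_const _) fun i => ((hy i).2 j k).le
    refine lt_of_le_of_ne h1 fun h => hne j k hjk ?_
    rw [h, show (x k + 2 * π - x k) / 2 = π by ring, Real.sin_pi]

/-- `θ` is the primitive of `v` on `[0, T]`. -/
def IsPrimitiveOn {n : ℕ} (T : ℝ) (θ v : ℝ → Fin n → ℝ) : Prop :=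
  (∀ j, IntegrableOn (fun s => v s j) (Icc 0 T)) ∧
    ∀ t ∈ Icc (0 : ℝ) T, ∀ j, θ t j = θ 0 j + ∫ s in (0 : ℝ)..t, v s j

lemma IsPrimitiveOn.continuousOn {n : ℕ} {T : ℝ} (hT : 0 ≤ T) {θ v : ℝ → Fin n → ℝ}
    (h : IsPrimitiveOn T θ v) : ContinuousOn θ (Icc 0 T) :=
  continuousOn_pi.2 fun j => by
    simpa [uIcc_of_le hT] using (absolutelyContinuousOnInterval_of_eq_integral hT (h.1 j)
      (fun t ht => h.2 t ht j)).continuousOn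

lemma ContinuousOn.phiA_comp {n : ℕ} {θ : ℝ → Fin n → ℝ} {S : Set ℝ} (h : ContinuousOn θ S)
    (hX : ∀ t ∈ S, θ t ∈ Xspace n) (a : ℝ) (j : Fin n) :
    ContinuousOn (fun s => phiA a (θ s) j) S := fun s hs =>
  (continuousAt_phiA a (hX s hs) j).comp_continuousWithinAt (h s hs)

lemma hasDerivAt_log_sin {u : ℝ} (hu : Real.sin u ≠ 0) :
    HasDerivAt (fun y => Real.log (Real.sin y)) (Real.cot u) u := by
  rw [Real.cot_eq_cos_div_sin]
  exact (Real.hasDerivAt_sin u).log hu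

lemma IsPrimitiveOn.log_sin_sub_eq_integral {n : ℕ} {T : ℝ} {θ v : ℝ → Fin n → ℝ}
    (h : IsPrimitiveOn T θ v) (hX : ∀ t ∈ Icc (0 : ℝ) T, θ t ∈ Xspace n) {t : ℝ}
    (ht : t ∈ Icc 0 T) (j k : Fin n) :
    Real.log (Real.sin ((θ t j - θ t k) / 2)) - Real.log (Real.sin ((θ 0 j - θ 0 k) / 2)) =
      ∫ s in (0 : ℝ)..t, Real.cot ((θ s j - θ s k) / 2) * ((v s j - v s k) / 2) := by
  by_cases hjk : j = k
  · subst hjk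
    simp
  have hne : ∀ s ∈ Icc (0 : ℝ) T, Real.sin ((θ s j - θ s k) / 2) ≠ 0 := fun s hs =>
    sin_half_sub_ne_zero (hX s hs) hjk
  have hint : ∀ s ∈ Icc (0 : ℝ) T, ∀ i, IntervalIntegrable (fun r => v r i) volume 0 s :=
    fun s hs i => (intervalIntegrable_iff_integrableOn_Icc_of_le hs.1).2
      ((h.1 i).mono_set (Icc_subset_Icc_right hs.2))
  have key := sub_eq_integral_deriv_comp_mul (T := T)
    (x := fun s => (θ s j - θ s k) / 2) (v := fun s => (v s j - v s k) / 2)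
    (g := fun y => Real.log (Real.sin y)) (((h.1 j).sub (h.1 k)).div_const 2)
    (fun s hs => by
      rw [intervalIntegral.integral_div, intervalIntegral.integral_sub (hint s hs j) (hint s hs k),
        h.2 s hs j, h.2 s hs k]
      ring)
    (fun s hs => (Real.contDiff_sin.contDiffAt).log (hne s hs)) ht
  refine key.trans (intervalIntegral.integral_congr fun s hs => ?_)
  rw [uIcc_of_le ht.1] at hs
  simp only [(hasDerivAt_log_sin (hne s (Icc_subset_Icc_right ht.2 hs))).deriv]

/-- The pairwise sum of cotangents against velocity differences is `2 ∑ φ^j v^j`. -/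
lemma sum_cot_mul_sub {n : ℕ} (x v : Fin n → ℝ) :
    ∑ j, ∑ k, Real.cot ((x j - x k) / 2) * ((v j - v k) / 2) = ∑ j, phi x j * v j := by
  have h1 : ∀ j, phi x j = ∑ k, Real.cot ((x j - x k) / 2) := fun j => by
    rw [phi, ← Finset.add_sum_erase _ _ (Finset.mem_univ j)]
    simp [Real.cot_eq_cos_div_sin]
  have h2 : ∑ j, ∑ k, Real.cot ((x j - x k) / 2) * v k =
      -∑ j, ∑ k, Real.cot ((x j - x k) / 2) * v j := by
    rw [Finset.sum_comm, ← Finset.sum_neg_distrib]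
    refine Finset.sum_congr rfl fun j _ => ?_
    rw [← Finset.sum_neg_distrib]
    refine Finset.sum_congr rfl fun k _ => ?_
    rw [show (x k - x j) / 2 = -((x j - x k) / 2) by ring]
    simp only [Real.cot_eq_cos_div_sin, Real.cos_neg, Real.sin_neg]
    ring
  have h3 : ∑ j, ∑ k, Real.cot ((x j - x k) / 2) * ((v j - v k) / 2) =
      (∑ j, ∑ k, Real.cot ((x j - x k) / 2) * v j -
        ∑ j, ∑ k, Real.cot ((x j - x k) / 2) * v k) / 2 := by
    simp only [← Finset.sum_sub_distrib, Finset.sum_div]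
    refine Finset.sum_congr rfl fun j _ => Finset.sum_congr rfl fun k _ => ?_
    ring
  rw [h3, h2]
  simp only [h1, Finset.sum_mul]
  ring

/-- The potential decreases along a path at rate `2 ∑ φ_a^j v^j`. -/
lemma IsPrimitiveOn.coulombPotential_sub {n : ℕ} {T : ℝ} {θ v : ℝ → Fin n → ℝ}
    (h : IsPrimitiveOn T θ v) (hX : ∀ t ∈ Icc (0 : ℝ) T, θ t ∈ Xspace n) (a : ℝ) {t : ℝ}
    (ht : t ∈ Icc 0 T) :
    coulombPotential a (θ t) - coulombPotential a (θ 0) =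
      ∫ s in (0 : ℝ)..t, -2 * ∑ j, phiA a (θ s) j * v s j := by
  have hint : ∀ j k, IntervalIntegrable
      (fun s => Real.cot ((θ s j - θ s k) / 2) * ((v s j - v s k) / 2)) volume 0 t := by
    intro j k
    by_cases hjk : j = k
    · subst hjk
      simp
    have hθ := continuousOn_pi.1 ((h.continuousOn (ht.1.trans ht.2)).mono
      (Icc_subset_Icc_right ht.2))
    refine IntervalIntegrable.continuousOn_mul ?_ ?_
    · exact (intervalIntegrable_iff_integrableOn_Icc_of_le ht.1).2
        (IntegrableOn.mono_set (((h.1 j).sub (h.1 k)).div_const 2 :)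
          (Icc_subset_Icc_right ht.2))
    · rw [uIcc_of_le ht.1]
      simp only [Real.cot_eq_cos_div_sin]
      have hd : ContinuousOn (fun s => (θ s j - θ s k) / 2) (Icc 0 t) :=
        ((hθ j).sub (hθ k)).div_const 2
      exact (Real.continuous_cos.comp_continuousOn hd).div (Real.continuous_sin.comp_continuousOn hd)
        fun s hs => sin_half_sub_ne_zero (hX s (Icc_subset_Icc_right ht.2 hs)) hjk
  have h1 : (fun s => -2 * ∑ j, phiA a (θ s) j * v s j) = fun s => -(a / 2) *
      ∑ j, ∑ k, Real.cot ((θ s j - θ s k) / 2) * ((v s j - v s k) / 2) := by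
    funext s
    rw [sum_cot_mul_sub, Finset.mul_sum, Finset.mul_sum]
    refine Finset.sum_congr rfl fun j _ => ?_
    rw [phiA]
    ring
  have hsum : ∀ j, IntervalIntegrable
      (fun s => ∑ k, Real.cot ((θ s j - θ s k) / 2) * ((v s j - v s k) / 2)) volume 0 t := by
    intro j
    simpa only [Finset.sum_fn] using IntervalIntegrable.sum Finset.univ fun k _ => hint j k
  rw [h1, intervalIntegral.integral_const_mul, intervalIntegral.integral_finsetSum
    fun j _ => hsum j]
  simp only [coulombPotential]
  rw [← mul_sub]
  congr 1
  rw [← Finset.sum_sub_distrib]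
  refine Finset.sum_congr rfl fun j _ => ?_
  rw [intervalIntegral.integral_finsetSum fun k _ => hint j k, ← Finset.sum_sub_distrib]
  exact Finset.sum_congr rfl fun k _ => h.log_sin_sub_eq_integral hX ht j k

lemma mEnergyA_le_iff {n : ℕ} {a T c : ℝ} {θ : ℝ → Fin n → ℝ} :
    mEnergyA n a T θ ≤ ENNReal.ofReal c ↔ ∃ v, IsPrimitiveOn T θ v ∧
      ∫⁻ s in Ioc (0 : ℝ) T, ENNReal.ofReal (∑ j, (v s j - 2 * phiA a (θ s) j) ^ 2) ≤
        ENNReal.ofReal (2 * c) := by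
  have hiff : ∀ I : ℝ≥0∞, ENNReal.ofReal (1 / 2) * I ≤ ENNReal.ofReal c ↔
      I ≤ ENNReal.ofReal (2 * c) := fun I => by
    have h : ENNReal.ofReal c = ENNReal.ofReal (1 / 2) * ENNReal.ofReal (2 * c) := by
      rw [← ENNReal.ofReal_mul (by norm_num)]
      congr 1
      ring
    rw [h, ENNReal.mul_le_mul_iff_right (by simp) ENNReal.ofReal_ne_top]
  have heq : ∀ v, IsPrimitiveOn T θ v →
      ∫⁻ s in Ioc (0 : ℝ) T,
        ENNReal.ofReal (∑ j, (deriv (fun t => θ t j) s - 2 * phiA a (θ s) j) ^ 2) =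
      ∫⁻ s in Ioc (0 : ℝ) T, ENNReal.ofReal (∑ j, (v s j - 2 * phiA a (θ s) j) ^ 2) := by
    intro v hv
    refine lintegral_congr_ae ((ae_restrict_iff' measurableSet_Ioc).2 ?_)
    have hne : ∀ᵐ s : ℝ, s ≠ T := by simp [ae_iff, measure_singleton]
    filter_upwards [ae_all_iff.2 fun j =>
      ae_hasDerivAt_of_eq_integral (hv.1 j) (fun t ht => hv.2 t ht j), hne] with s hs hsT hmem
    simp only [(hs _ ⟨hmem.1, lt_of_le_of_ne hmem.2 hsT⟩).deriv]
  rw [mEnergyA]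
  constructor
  · intro h
    split_ifs at h with hac
    · obtain ⟨v, hv⟩ := hac
      exact ⟨v, hv, (heq v hv) ▸ (hiff _).1 h⟩
    · simp at h
  · rintro ⟨v, hv, h⟩
    rw [if_pos ⟨v, hv⟩, hiff, heq v hv]
    exact h

/-- A priori bound: finite energy controls both the kinetic energy and the potential. -/
lemma IsPrimitiveOn.energy_estimate {n : ℕ} {a T c : ℝ} (hc : 0 ≤ c)
    {θ v : ℝ → Fin n → ℝ} (h : IsPrimitiveOn T θ v)
    (hX : ∀ t ∈ Icc (0 : ℝ) T, θ t ∈ Xspace n)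
    (hE : ∫⁻ s in Ioc (0 : ℝ) T, ENNReal.ofReal (∑ j, (v s j - 2 * phiA a (θ s) j) ^ 2) ≤
      ENNReal.ofReal (2 * c)) :
    (∀ j, IntegrableOn (fun s => v s j ^ 2) (Ioc 0 T)) ∧ ∀ t ∈ Icc (0 : ℝ) T,
      (∫ s in (0 : ℝ)..t, ∑ j, v s j ^ 2) + 2 * coulombPotential a (θ t) ≤
        2 * c + 2 * coulombPotential a (θ 0) := by
  rcases lt_or_ge T 0 with hT | hT
  · simp [hT.le, not_le.2 hT]
  have hφ : ∀ j, ContinuousOn (fun s => phiA a (θ s) j) (Icc 0 T) :=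
    (h.continuousOn hT).phiA_comp hX a
  have hv : ∀ j, IntegrableOn (fun s => v s j) (Ioc 0 T) := fun j =>
    (h.1 j).mono_set Ioc_subset_Icc_self
  have hφm : ∀ j, AEStronglyMeasurable (fun s => phiA a (θ s) j) (volume.restrict (Ioc 0 T)) :=
    fun j => ((hφ j).mono Ioc_subset_Icc_self).aestronglyMeasurable measurableSet_Ioc
  have hφi : ∀ j, IntegrableOn (fun s => phiA a (θ s) j ^ 2) (Ioc 0 T) := fun j =>
    (((hφ j).pow 2).integrableOn_Icc).mono_set Ioc_subset_Icc_self
  have hwm : ∀ j, AEStronglyMeasurable (fun s => (v s j - 2 * phiA a (θ s) j) ^ 2)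
      (volume.restrict (Ioc 0 T)) := fun j =>
    ((hv j).aestronglyMeasurable.sub ((hφm j).const_mul 2)).pow 2
  have hW0 : ∀ s, 0 ≤ ∑ j, (v s j - 2 * phiA a (θ s) j) ^ 2 := fun s =>
    Finset.sum_nonneg fun j _ => sq_nonneg _
  have hWm : AEStronglyMeasurable (fun s => ∑ j, (v s j - 2 * phiA a (θ s) j) ^ 2)
      (volume.restrict (Ioc 0 T)) := Finset.aestronglyMeasurable_fun_sum _ fun j _ => hwm j
  have hW : IntegrableOn (fun s => ∑ j, (v s j - 2 * phiA a (θ s) j) ^ 2) (Ioc 0 T) :=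
    ⟨hWm, (hasFiniteIntegral_iff_ofReal (Eventually.of_forall hW0)).2
      (hE.trans_lt ENNReal.ofReal_lt_top)⟩
  have hWle : ∫ s in Ioc 0 T, ∑ j, (v s j - 2 * phiA a (θ s) j) ^ 2 ≤ 2 * c := by
    rw [integral_eq_lintegral_of_nonneg_ae (Eventually.of_forall hW0) hWm]
    exact ENNReal.toReal_le_of_le_ofReal (by linarith) hE
  have hv2 : ∀ j, IntegrableOn (fun s => v s j ^ 2) (Ioc 0 T) := fun j => by
    refine ((hW.const_mul 2).add ((hφi j).const_mul 8)).mono'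
      ((hv j).aestronglyMeasurable.pow 2) (Eventually.of_forall fun s => ?_)
    have h1 := Finset.single_le_sum (f := fun i => (v s i - 2 * phiA a (θ s) i) ^ 2)
      (fun i _ => sq_nonneg _) (Finset.mem_univ j)
    simp only [Pi.add_apply, Real.norm_eq_abs, abs_of_nonneg (sq_nonneg (v s j))] at *
    nlinarith [sq_nonneg (v s j - 4 * phiA a (θ s) j)]
  refine ⟨hv2, fun t ht => ?_⟩
  have hsub : Ioc 0 t ⊆ Ioc 0 T := Ioc_subset_Ioc_right ht.2
  have hcross : IntegrableOn (fun s => -2 * ∑ j, phiA a (θ s) j * v s j) (Ioc 0 t) := by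
    refine Integrable.const_mul (integrable_finsetSum _ fun j _ => ?_) _
    exact ((h.1 j).continuousOn_mul (hφ j) isCompact_Icc).mono_set (hsub.trans Ioc_subset_Icc_self)
  have hpot := h.coulombPotential_sub hX a ht
  rw [intervalIntegral.integral_of_le ht.1] at hpot ⊢
  have h1 : ∫ s in Ioc 0 t, ∑ j, v s j ^ 2 ≤ ∫ s in Ioc 0 t,
      (∑ j, (v s j - 2 * phiA a (θ s) j) ^ 2 - 2 * (-2 * ∑ j, phiA a (θ s) j * v s j)) := by
    refine setIntegral_mono (integrable_finsetSum _ fun j _ => (hv2 j).mono_set hsub)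
      ((hW.mono_set hsub).sub (hcross.const_mul 2)) fun s => ?_
    simp only [Finset.mul_sum, ← Finset.sum_sub_distrib]
    refine Finset.sum_le_sum fun j _ => ?_
    nlinarith [sq_nonneg (phiA a (θ s) j)]
  rw [integral_sub (hW.mono_set hsub) (hcross.const_mul 2), integral_const_mul, ← hpot] at h1
  have h2 := setIntegral_mono_set hW (Eventually.of_forall hW0) hsub.eventuallyLE
  linarith

lemma sq_intervalIntegral_le {f : ℝ → ℝ} {s t : ℝ} (hst : s ≤ t)
    (hf : IntervalIntegrable f volume s t)
    (hf2 : IntervalIntegrable (fun x => f x ^ 2) volume s t) :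
    (∫ x in s..t, f x) ^ 2 ≤ (t - s) * ∫ x in s..t, f x ^ 2 := by
  rcases hst.eq_or_lt with rfl | hlt
  · simp
  set m := (∫ x in s..t, f x) / (t - s) with hm
  have h0 : 0 ≤ ∫ x in s..t, (f x ^ 2 - 2 * m * f x + m ^ 2) :=
    intervalIntegral.integral_nonneg hst fun x _ => by nlinarith [sq_nonneg (f x - m)]
  rw [intervalIntegral.integral_add (hf2.sub (hf.const_mul _)) intervalIntegrable_const,
    intervalIntegral.integral_sub hf2 (hf.const_mul _), intervalIntegral.integral_const_mul,
    intervalIntegral.integral_const, smul_eq_mul] at h0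
  have h1 : ∫ x in s..t, f x = m * (t - s) := by
    rw [hm, div_mul_cancel₀ _ (sub_pos.2 hlt).ne']
  rw [h1] at h0 ⊢
  nlinarith [mul_nonneg (sub_pos.2 hlt).le h0]

/-- Paths of finite kinetic energy are `1/2`-Hölder. -/
lemma IsPrimitiveOn.sum_sq_sub_le {n : ℕ} {T : ℝ} {θ v : ℝ → Fin n → ℝ}
    (h : IsPrimitiveOn T θ v) (hv2 : ∀ j, IntegrableOn (fun s => v s j ^ 2) (Ioc 0 T))
    {s t : ℝ} (hs : 0 ≤ s) (hst : s ≤ t) (ht : t ≤ T) :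
    ∑ j, (θ t j - θ s j) ^ 2 ≤ (t - s) * ∫ r in (0 : ℝ)..T, ∑ j, v r j ^ 2 := by
  have hT : 0 ≤ T := hs.trans (hst.trans ht)
  have hsub : Ioc s t ⊆ Ioc 0 T := Ioc_subset_Ioc hs ht
  have hvi : ∀ j, ∀ {p q : ℝ}, 0 ≤ p → p ≤ q → q ≤ T →
      IntervalIntegrable (fun r => v r j) volume p q := fun j p q hp hpq hq =>
    (intervalIntegrable_iff_integrableOn_Icc_of_le hpq).2 ((h.1 j).mono_set (Icc_subset_Icc hp hq))
  have hv2i : ∀ j, IntervalIntegrable (fun r => v r j ^ 2) volume s t := fun j =>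
    (intervalIntegrable_iff_integrableOn_Ioc_of_le hst).2 ((hv2 j).mono_set hsub)
  calc ∑ j, (θ t j - θ s j) ^ 2 ≤ ∑ j, (t - s) * ∫ r in s..t, v r j ^ 2 := by
        refine Finset.sum_le_sum fun j _ => ?_
        have h1 : θ t j - θ s j = ∫ r in s..t, v r j := by
          rw [h.2 t ⟨hs.trans hst, ht⟩ j, h.2 s ⟨hs, hst.trans ht⟩ j, add_sub_add_left_eq_sub,
            intervalIntegral.integral_interval_sub_left (hvi j le_rfl (hs.trans hst) ht)
              (hvi j le_rfl hs (hst.trans ht))]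
        rw [h1]
        exact sq_intervalIntegral_le hst (hvi j hs hst ht) (hv2i j)
    _ = (t - s) * ∫ r in s..t, ∑ j, v r j ^ 2 := by
        rw [← Finset.mul_sum, intervalIntegral.integral_finsetSum fun j _ => hv2i j]
    _ ≤ (t - s) * ∫ r in (0 : ℝ)..T, ∑ j, v r j ^ 2 := by
        refine mul_le_mul_of_nonneg_left ?_ (sub_nonneg.2 hst)
        rw [intervalIntegral.integral_of_le hst, intervalIntegral.integral_of_le hT]
        exact setIntegral_mono_set (integrable_finsetSum _ fun j _ => hv2 j)
          (Eventually.of_forall fun r => Finset.sum_nonneg fun j _ => sq_nonneg _)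
          hsub.eventuallyLE

lemma eLpNorm_two_le_iff {n : ℕ} {μ : Measure ℝ} {C : ℝ} (hC : 0 ≤ C)
    (f : ℝ → EuclideanSpace ℝ (Fin n)) :
    eLpNorm f 2 μ ≤ ENNReal.ofReal (√C) ↔
      ∫⁻ s, ENNReal.ofReal (∑ j, f s j ^ 2) ∂μ ≤ ENNReal.ofReal C := by
  have h1 : ∫⁻ s, ENNReal.ofReal (∑ j, f s j ^ 2) ∂μ = eLpNorm f 2 μ ^ (2 : ℕ) := by
    have h := eLpNorm_nnreal_pow_eq_lintegral (μ := μ) (f := f) (p := 2) two_ne_zero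
    simp only [NNReal.coe_ofNat, ENNReal.coe_ofNat, ENNReal.rpow_ofNat] at h
    rw [h]
    refine lintegral_congr fun s => ?_
    rw [← EuclideanSpace.real_norm_sq_eq, ENNReal.ofReal_pow (norm_nonneg _), ofReal_norm]
  have h2 : ENNReal.ofReal C = ENNReal.ofReal (√C) ^ (2 : ℕ) := by
    rw [← ENNReal.ofReal_pow (Real.sqrt_nonneg _), Real.sq_sqrt hC]
  rw [h1, h2]
  exact (ENNReal.pow_le_pow_left_iff two_ne_zero).symm

/-- Weak sequential compactness of balls of `L²(0, T)`, phrased in terms of primitives. -/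
lemma exists_primitive_of_tendsto_integral {n : ℕ} {T C : ℝ} (hC : 0 ≤ C)
    {u : ℕ → ℝ → Fin n → ℝ} {G : ℝ → Fin n → ℝ}
    (hu : ∀ k j, AEStronglyMeasurable (fun s => u k s j) (volume.restrict (Ioc 0 T)))
    (huC : ∀ k, ∫⁻ s in Ioc 0 T, ENNReal.ofReal (∑ j, u k s j ^ 2) ≤ ENNReal.ofReal C)
    (hlim : ∀ t ∈ Icc (0 : ℝ) T, ∀ j,
      Tendsto (fun k => ∫ s in (0 : ℝ)..t, u k s j) atTop (𝓝 (G t j))) :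
    ∃ w : ℝ → Fin n → ℝ, (∀ j, IntegrableOn (fun s => w s j) (Ioc 0 T)) ∧
      ∫⁻ s in Ioc 0 T, ENNReal.ofReal (∑ j, w s j ^ 2) ≤ ENNReal.ofReal C ∧
      ∀ t ∈ Icc (0 : ℝ) T, ∀ j, ∫ s in (0 : ℝ)..t, w s j = G t j := by
  set μ : Measure ℝ := volume.restrict (Ioc 0 T) with hμ
  let E := EuclideanSpace ℝ (Fin n)
  have hle : ∀ k, eLpNorm (fun s => (WithLp.toLp 2 (u k s) : E)) 2 μ ≤ ENNReal.ofReal (√C) :=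
    fun k => (eLpNorm_two_le_iff hC _).2 (huC k)
  have hmem : ∀ k, MemLp (fun s => (WithLp.toLp 2 (u k s) : E)) 2 μ := fun k =>
    ⟨(PiLp.continuous_toLp 2 _).comp_aestronglyMeasurable
      (aemeasurable_pi_lambda _ fun j => (hu k j).aemeasurable).aestronglyMeasurable,
      (hle k).trans_lt ENNReal.ofReal_lt_top⟩
  let U : ℕ → Lp E 2 μ := fun k => (hmem k).toLp _
  have hU : ∀ k, ‖U k‖ ≤ √C := fun k => by
    rw [Lp.norm_toLp]
    exact ENNReal.toReal_le_of_le_ofReal (Real.sqrt_nonneg _) (hle k)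
  let L : ℕ → WeakDual ℝ (Lp E 2 μ) := fun k =>
    StrongDual.toWeakDual (InnerProductSpace.toDual ℝ _ (U k))
  obtain ⟨ℓ, hℓ, hcl⟩ := (WeakDual.isCompact_closedBall (𝕜 := ℝ) (0 : StrongDual ℝ (Lp E 2 μ))
    (√C)).exists_mapClusterPt (f := atTop) (u := L) (by
      rw [le_principal_iff, mem_map]
      refine univ_mem' fun k => ?_
      simpa [L] using hU k)
  let W : Lp E 2 μ := (InnerProductSpace.toDual ℝ _).symm (WeakDual.toStrongDual ℓ)
  have hW : ‖W‖ ≤ √C := by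
    simpa [W] using hℓ
  have hWint : Integrable (W : ℝ → E) μ := (Lp.memLp W).integrable one_le_two
  have hpair : ∀ (V : Lp E 2 μ) {t : ℝ} (ht : t ∈ Icc 0 T) (j : Fin n),
      inner ℝ V (indicatorConstLp 2 (measurableSet_Ioc (a := (0 : ℝ)) (b := t))
        (measure_ne_top μ _) (EuclideanSpace.single j (1 : ℝ) : E)) =
      ∫ s in (0 : ℝ)..t, V s j := by
    intro V t ht j
    have hr : μ.restrict (Ioc 0 t) = volume.restrict (Ioc 0 t) := by
      rw [hμ, Measure.restrict_restrict measurableSet_Ioc,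
        inter_eq_left.2 (Ioc_subset_Ioc_right ht.2)]
    rw [real_inner_comm, L2.inner_indicatorConstLp_eq_setIntegral_inner,
      intervalIntegral.integral_of_le ht.1, hr]
    refine integral_congr_ae (Eventually.of_forall fun s => ?_)
    exact (EuclideanSpace.inner_single_left j (1 : ℝ) (V s)).trans (by simp)
  refine ⟨fun s => (W s : Fin n → ℝ), fun j => ?_, ?_, fun t ht j => ?_⟩
  · exact (EuclideanSpace.proj j : E →L[ℝ] ℝ).integrable_comp hWint
  · refine (eLpNorm_two_le_iff hC _).1 ?_
    rw [Lp.norm_def] at hW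
    exact (ENNReal.le_ofReal_iff_toReal_le (Lp.eLpNorm_ne_top W) (Real.sqrt_nonneg _)).2 hW
  · rw [← hpair W ht j]
    set e := indicatorConstLp 2 (measurableSet_Ioc (a := (0 : ℝ)) (b := t))
        (measure_ne_top μ _) (EuclideanSpace.single j (1 : ℝ) : E) with he
    have h1 : MapClusterPt (ℓ e) atTop (fun k => L k e) :=
      hcl.continuousAt_comp (f := fun l : WeakDual ℝ (Lp E 2 μ) => l e)
        (WeakDual.eval_continuous e).continuousAt
    have h2 : Tendsto (fun k => L k e) atTop (𝓝 (G t j)) := by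
      refine (hlim t ht j).congr fun k => ?_
      have h3 : L k e = inner ℝ (U k) e := rfl
      rw [h3, he, hpair (U k) ht j]
      refine intervalIntegral.integral_congr_ae ?_
      rw [uIoc_of_le ht.1]
      have h4 := (ae_restrict_iff' measurableSet_Ioc).1 (hmem k).coeFn_toLp
      filter_upwards [h4] with s hs hsmem
      rw [hs (Ioc_subset_Ioc_right ht.2 hsmem)]
    have h3 : inner ℝ W e = ℓ e := InnerProductSpace.toDual_symm_apply
    rw [h3]
    exact eq_of_nhds_neBot (h1.clusterPt.mono h2)

/-- Sublevel sets of the energy are closed under pointwise limits of paths with a common start. -/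
lemma mEnergyA_le_of_tendsto {n : ℕ} {a T c : ℝ} (ha : 0 < a) (hT : 0 ≤ T) (hc : 0 ≤ c)
    {θ₀ : Fin n → ℝ} {θ : ℝ → Fin n → ℝ} {Θ : ℕ → ℝ → Fin n → ℝ}
    (hΘX : ∀ k, ∀ t ∈ Icc (0 : ℝ) T, Θ k t ∈ Xspace n) (hΘ0 : ∀ k, Θ k 0 = θ₀)
    (hΘE : ∀ k, mEnergyA n a T (Θ k) ≤ ENNReal.ofReal c) (hθ : ContinuousOn θ (Icc 0 T))
    (hlim : ∀ t ∈ Icc (0 : ℝ) T, ∀ j, Tendsto (fun k => Θ k t j) atTop (𝓝 (θ t j))) :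
    (∀ t ∈ Icc (0 : ℝ) T, θ t ∈ Xspace n) ∧ mEnergyA n a T θ ≤ ENNReal.ofReal c := by
  choose v hv hvE using fun k => mEnergyA_le_iff.1 (hΘE k)
  have h0 : (0 : ℝ) ∈ Icc 0 T := left_mem_Icc.2 hT
  set ε := Real.exp (-(2 * (c + coulombPotential a θ₀) / a)) with hε
  have hε0 : 0 < ε := Real.exp_pos _
  have hsin : ∀ k, ∀ t ∈ Icc (0 : ℝ) T, ∀ i j : Fin n, i ≠ j →
      ε ≤ |Real.sin ((Θ k t i - Θ k t j) / 2)| := fun k t ht i j hij => by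
    refine exp_le_abs_sin_half_sub ha (hΘX k t ht) ?_ hij
    have h1 := ((hv k).energy_estimate hc (hΘX k) (hvE k)).2 t ht
    have h2 : 0 ≤ ∫ s in (0 : ℝ)..t, ∑ j, v k s j ^ 2 :=
      intervalIntegral.integral_nonneg ht.1 fun s _ => Finset.sum_nonneg fun j _ => sq_nonneg _
    rw [hΘ0] at h1
    linarith
  have hX : ∀ t ∈ Icc (0 : ℝ) T, θ t ∈ Xspace n := fun t ht =>
    mem_Xspace_of_tendsto hε0 (fun k => hΘX k t ht) (fun k => hsin k t ht) (hlim t ht)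
  refine ⟨hX, ?_⟩
  have hΘφ : ∀ k j, ContinuousOn (fun s => 2 * phiA a (Θ k s) j) (Icc 0 T) := fun k j =>
    (((hv k).continuousOn hT).phiA_comp (hΘX k) a j).const_mul 2
  have hθφ : ∀ j, ContinuousOn (fun s => 2 * phiA a (θ s) j) (Icc 0 T) := fun j =>
    (hθ.phiA_comp hX a j).const_mul 2
  have hdrift : ∀ t ∈ Icc (0 : ℝ) T, ∀ j, Tendsto
      (fun k => ∫ s in (0 : ℝ)..t, 2 * phiA a (Θ k s) j) atTop
      (𝓝 (∫ s in (0 : ℝ)..t, 2 * phiA a (θ s) j)) := by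
    intro t ht j
    have hsub : uIoc 0 t ⊆ Icc 0 T := by
      rw [uIoc_of_le ht.1]
      exact Ioc_subset_Icc_self.trans (Icc_subset_Icc_right ht.2)
    refine intervalIntegral.tendsto_integral_filter_of_dominated_convergence
      (fun _ => 2 * (a / 4 * (n * ε⁻¹))) ?_ ?_ intervalIntegrable_const ?_
    · exact Eventually.of_forall fun k =>
        ((hΘφ k j).mono hsub).aestronglyMeasurable measurableSet_uIoc
    · refine Eventually.of_forall fun k => Eventually.of_forall fun s hs => ?_
      rw [phiA, Real.norm_eq_abs, abs_mul, abs_mul, abs_of_pos (two_pos : (0 : ℝ) < 2),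
        abs_of_pos (by positivity : 0 < a / 4)]
      gcongr
      exact abs_phi_le hε0 (hsin k s (hsub hs)) j
    · refine Eventually.of_forall fun s hs => Tendsto.const_mul 2 ?_
      exact (continuousAt_phiA a (hX s (hsub hs)) j).tendsto.comp
        (tendsto_pi_nhds.2 (hlim s (hsub hs)))
  have hmono : ∀ {t : ℝ}, t ∈ Icc 0 T → ∀ {f : ℝ → ℝ}, IntegrableOn f (Icc 0 T) →
      IntervalIntegrable f volume 0 t := fun ht _ hf =>
    (intervalIntegrable_iff_integrableOn_Icc_of_le ht.1).2
      (hf.mono_set (Icc_subset_Icc_right ht.2))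
  obtain ⟨w, hwi, hwE, hw⟩ := exists_primitive_of_tendsto_integral (T := T)
    (u := fun k s j => v k s j - 2 * phiA a (Θ k s) j)
    (G := fun t j => θ t j - θ 0 j - ∫ s in (0 : ℝ)..t, 2 * phiA a (θ s) j)
    (by linarith : 0 ≤ 2 * c)
    (fun k j => (IntegrableOn.mono_set (((hv k).1 j).sub (hΘφ k j).integrableOn_Icc :)
      Ioc_subset_Icc_self).aestronglyMeasurable)
    hvE (fun t ht j => by
      refine (((hlim t ht j).sub (hlim 0 h0 j)).sub (hdrift t ht j)).congr fun k => ?_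
      rw [intervalIntegral.integral_sub (hmono ht ((hv k).1 j))
        (hmono ht (hΘφ k j).integrableOn_Icc), (hv k).2 t ht j]
      ring)
  have hwi' : ∀ j, IntegrableOn (fun s => w s j) (Icc 0 T) := fun j => by
    rw [integrableOn_Icc_iff_integrableOn_Ioc]
    exact hwi j
  refine mEnergyA_le_iff.2 ⟨fun s j => w s j + 2 * phiA a (θ s) j, ⟨fun j => ?_, fun t ht j => ?_⟩,
    ?_⟩
  · exact (hwi' j).add (hθφ j).integrableOn_Icc
  · rw [intervalIntegral.integral_add
      (hmono ht (hwi' j))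
      (hmono ht (hθφ j).integrableOn_Icc), hw t ht j]
    ring
  · simpa using hwE

/-- Pinned `1/2`-Hölder functions with a fixed constant form a compact set. -/
lemma isCompact_setOf_dist_sq_le {X E : Type*} [PseudoMetricSpace X] [CompactSpace X]
    [MetricSpace E] [ProperSpace E] (x₀ : X) (e₀ : E) (M : ℝ) :
    IsCompact {f : C(X, E) | f x₀ = e₀ ∧ ∀ s t, dist (f s) (f t) ^ 2 ≤ M * dist s t} := by
  have hmod : Tendsto (fun r : ℝ => √(M * r)) (𝓝 0) (𝓝 0) := by
    have h : Continuous fun r : ℝ => √(M * r) := by fun_prop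
    simpa using h.tendsto 0
  refine ArzelaAscoli.isCompact_of_equicontinuous _ ?_ ?_
  · have himage : ContinuousMap.toFun ''
        {f : C(X, E) | f x₀ = e₀ ∧ ∀ s t, dist (f s) (f t) ^ 2 ≤ M * dist s t} =
        {g : X → E | g x₀ = e₀ ∧ ∀ s t, dist (g s) (g t) ^ 2 ≤ M * dist s t} := by
      ext g
      constructor
      · rintro ⟨f, hf, rfl⟩
        exact hf
      · intro hg
        have hcont : Continuous g := continuous_iff_continuousAt.2 fun t => by
          refine tendsto_iff_dist_tendsto_zero.2 (squeeze_zero (fun _ => dist_nonneg)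
            (fun s => Real.le_sqrt_of_sq_le (hg.2 s t)) ?_)
          refine hmod.comp ?_
          simpa using (continuous_id.dist (continuous_const (y := t))).tendsto t
        exact ⟨⟨g, hcont⟩, hg, rfl⟩
    rw [himage]
    refine (isCompact_univ_pi fun x =>
      isCompact_closedBall e₀ (√(M * dist x x₀))).of_isClosed_subset ?_ ?_
    · simp only [ofPred_and, ofPred_forall]
      refine (isClosed_eq (continuous_apply x₀) continuous_const).inter
        (isClosed_iInter fun s => isClosed_iInter fun t => isClosed_le ?_ continuous_const)
      fun_prop
    · intro g hg x _
      rw [Metric.mem_closedBall, ← hg.1]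
      exact Real.le_sqrt_of_sq_le (hg.2 x x₀)
  · refine Metric.equicontinuous_of_continuity_modulus _ hmod _ fun s t f => ?_
    exact Real.le_sqrt_of_sq_le (f.2.2 s t)

lemma isCompact_setOf_mEnergyA_le {n : ℕ} {T a c : ℝ} (hT : 0 < T) (ha : 0 < a) (hc : 0 ≤ c)
    (θ₀ : Fin n → ℝ) :
    IsCompact {f : ContinuousMap (Icc (0 : ℝ) T) (EuclideanSpace ℝ (Fin n)) |
      (∀ s : Icc (0 : ℝ) T, (fun j => f s j) ∈ Xspace n) ∧
      (fun j => f ⟨0, Set.left_mem_Icc.mpr hT.le⟩ j) = θ₀ ∧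
      mEnergyA n a T (fun t j => f (Set.projIcc 0 T hT.le t) j) ≤ ENNReal.ofReal c} := by
  refine (isCompact_setOf_dist_sq_le (⟨0, Set.left_mem_Icc.mpr hT.le⟩ : Icc (0 : ℝ) T)
    (WithLp.toLp 2 θ₀) (2 * c + 2 * coulombPotential a θ₀)).of_isClosed_subset ?_ ?_
  · refine IsSeqClosed.isClosed fun F f hF hlim => ?_
    have hpt : ∀ s j, Tendsto (fun k => F k s j) atTop (𝓝 (f s j)) := fun s j =>
      ((EuclideanSpace.proj j : EuclideanSpace ℝ (Fin n) →L[ℝ] ℝ).continuous.tendsto _).comp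
        (((continuous_eval_const s).tendsto f).comp hlim)
    have hcont : Continuous fun (t : ℝ) (j : Fin n) => f (Set.projIcc 0 T hT.le t) j :=
      continuous_pi fun j => by fun_prop
    obtain ⟨h1, h2⟩ := mEnergyA_le_of_tendsto (θ₀ := θ₀) ha hT.le hc
      (Θ := fun k t j => F k (Set.projIcc 0 T hT.le t) j)
      (fun k t _ => (hF k).1 _) (fun k => by simpa [projIcc_left] using (hF k).2.1)
      (fun k => (hF k).2.2) hcont.continuousOn (fun t _ j => hpt _ j)
    refine ⟨fun s => by simpa using h1 s s.2, funext fun j => ?_, h2⟩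
    refine tendsto_nhds_unique (hpt _ j) ?_
    exact tendsto_const_nhds.congr fun k => (congrFun (hF k).2.1 j).symm
  · rintro f ⟨hX, h0, hE⟩
    obtain ⟨v, hv, hvE⟩ := mEnergyA_le_iff.1 hE
    obtain ⟨hv2, hest⟩ := hv.energy_estimate hc (fun t _ => hX _) hvE
    have hM := hest T (right_mem_Icc.2 hT.le)
    have hpot := coulombPotential_nonneg ha.le
      (fun j => f (Set.projIcc 0 T hT.le T) j : Fin n → ℝ)
    simp only [projIcc_left, h0] at hM
    have key : ∀ s t : Icc (0 : ℝ) T, s ≤ t →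
        dist (f s) (f t) ^ 2 ≤ (2 * c + 2 * coulombPotential a θ₀) * dist s t := by
      intro s t hst
      have h1 := hv.sum_sq_sub_le hv2 s.2.1 (Subtype.coe_le_coe.2 hst) t.2.2
      simp only [projIcc_val] at h1
      have h2 : (0 : ℝ) ≤ t - s := sub_nonneg.2 hst
      rw [dist_comm, dist_comm s, EuclideanSpace.dist_eq, Real.sq_sqrt
        (Finset.sum_nonneg fun j _ => sq_nonneg _), Subtype.dist_eq, Real.dist_eq,
        abs_of_nonneg h2]
      simp only [Real.dist_eq, sq_abs]
      refine h1.trans ?_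
      rw [mul_comm]
      exact mul_le_mul_of_nonneg_right (by linarith) h2
    refine ⟨?_, fun s t => ?_⟩
    · ext j
      exact congrFun h0 j
    · rcases le_total s t with hst | hst
      · exact key s t hst
      · rw [dist_comm, dist_comm s]
        exact key t s hst

/-- On the space `C_{θ₀}([0,T], 𝒳ₙ)` of continuous paths started at
`θ₀ ∈ 𝒳ₙ` (with the supremum metric coming from the Euclidean norm on `ℝⁿ`), the
multiradial Dirichlet energy `J^a_T` is a good rate function: its sublevel sets are
compact; in particular it is lower semicontinuous. -/
theorem mEnergyA_good_rate_function
    (n : ℕ) (hn : 1 ≤ n) (T a : ℝ) (hT : 0 < T) (ha : 0 < a)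
    (θ₀ : Fin n → ℝ) (hθ₀ : θ₀ ∈ Xspace n) :
    (∀ c : ℝ, 0 ≤ c →
      IsCompact {f : ContinuousMap (Icc (0 : ℝ) T) (EuclideanSpace ℝ (Fin n)) |
        (∀ s : Icc (0 : ℝ) T, (fun j => f s j) ∈ Xspace n) ∧
        (fun j => f ⟨0, Set.left_mem_Icc.mpr hT.le⟩ j) = θ₀ ∧
        mEnergyA n a T (fun t j => f (Set.projIcc 0 T hT.le t) j) ≤ ENNReal.ofReal c}) ∧
    LowerSemicontinuousOn
      (fun f : ContinuousMap (Icc (0 : ℝ) T) (EuclideanSpace ℝ (Fin n)) =>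
        mEnergyA n a T (fun t j => f (Set.projIcc 0 T hT.le t) j))
      {f | (∀ s : Icc (0 : ℝ) T, (fun j => f s j) ∈ Xspace n) ∧
        (fun j => f ⟨0, Set.left_mem_Icc.mpr hT.le⟩ j) = θ₀} := by
  have hcompact := fun c (hc : 0 ≤ c) => isCompact_setOf_mEnergyA_le hT ha hc θ₀
  refine ⟨hcompact, lowerSemicontinuousOn_iff_preimage_Iic.2 fun b => ?_⟩
  rcases eq_or_ne b ⊤ with rfl | hb
  · exact ⟨univ, isClosed_univ, by simp⟩
  · refine ⟨_, (hcompact b.toReal ENNReal.toReal_nonneg).isClosed, ?_⟩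
    ext f
    simp only [ENNReal.ofReal_toReal hb, mem_inter_iff, mem_ofPred_eq, mem_preimage, mem_Iic]
    tauto

end
end

section
/- Zero-energy flow with spiral converges to a rotating equally spaced configuration. Fix n ≥ 2, a > 0 and ρ ∈ ℝ. For every θ₀ ∈ 𝒳ₙ the differential equation dθ^j_t/dt = 2φ_a^j(θ_t) + ρ (for all j ∈ {1,…,n} and t ≥ 0) has a unique differentiable solution θ : [0,∞) → 𝒳ₙ with θ(0) = θ₀, and there exist ζ ∈ ℝ and C ≥ 0 such that |θ^j_t − ρt − ζ − (j−1)·2π/n| ≤ C·e^{−(a/4)·n·t} for all t ≥ 0 and all j; i.e., θ_t − ρt·(1,…,1) converges to the equally spaced configuration (ζ, ζ + 2π/n, …, ζ + (n−1)·2π/n) exponentially fast with exponential rate (a/4)·n. -/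
open MeasureTheory Filter Set
open scoped Real Topology ENNReal Classical

noncomputable section

/-! ### The cotangent on `(0, π)` -/

lemma cot_pi_sub (u : ℝ) : Real.cot (π - u) = -Real.cot u := by
  rw [Real.cot_eq_cos_div_sin, Real.cot_eq_cos_div_sin, Real.cos_pi_sub, Real.sin_pi_sub, neg_div]

lemma cot_neg (u : ℝ) : Real.cot (-u) = -Real.cot u := by
  rw [Real.cot_eq_cos_div_sin, Real.cot_eq_cos_div_sin, Real.cos_neg, Real.sin_neg, div_neg]

lemma cot_periodic : Function.Periodic Real.cot π := fun u => by
  rw [Real.cot_eq_cos_div_sin, Real.cot_eq_cos_div_sin, Real.cos_add_pi, Real.sin_add_pi,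
    neg_div_neg_eq]

lemma hasDerivAt_cot {u : ℝ} (hu : Real.sin u ≠ 0) :
    HasDerivAt Real.cot (-(1 + Real.cot u ^ 2)) u := by
  have h := (Real.hasDerivAt_cos u).div (Real.hasDerivAt_sin u) hu
  have e : Real.cot = fun x => Real.cos x / Real.sin x := funext Real.cot_eq_cos_div_sin
  rw [e]
  convert! h using 1
  field_simp
  ring

lemma antitoneOn_cot_add_id : AntitoneOn (fun u => Real.cot u + u) (Ioo 0 π) := by
  have h : ∀ u ∈ Ioo 0 π, HasDerivAt (fun u => Real.cot u + u) (-(1 + Real.cot u ^ 2) + 1) u :=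
    fun u hu => (hasDerivAt_cot (Real.sin_pos_of_mem_Ioo hu).ne').add (hasDerivAt_id u)
  refine antitoneOn_of_hasDerivWithinAt_nonpos (convex_Ioo 0 π)
    (fun u hu => (h u hu).continuousAt.continuousWithinAt)
    (fun u hu => (h u (interior_subset hu)).hasDerivWithinAt) fun u _ => ?_
  nlinarith [sq_nonneg (Real.cot u)]

/-- Strong monotonicity of `-cot` on `(0, π)`, with modulus `1`. -/
lemma sub_mul_cot_sub_le {u v : ℝ} (hu : u ∈ Ioo 0 π) (hv : v ∈ Ioo 0 π) :
    (u - v) * (Real.cot u - Real.cot v) ≤ -(u - v) ^ 2 := by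
  rcases le_total u v with huv | huv
  · have := antitoneOn_cot_add_id hu hv huv
    simp only at this
    nlinarith
  · have := antitoneOn_cot_add_id hv hu huv
    simp only at this
    nlinarith

/-! ### Phases of a configuration -/

/-- Half of the angle `θ^j - θ^k`, normalised so that it lies in `(0, π)` exactly when `θ ∈ 𝒳ₙ`;
the diagonal value is `π / 2`, a zero of the cotangent. -/
def phase {n : ℕ} (x : Fin n → ℝ) (j k : Fin n) : ℝ :=
  (x j - x k) / 2 + if k < j then 0 else if j < k then π else π / 2

lemma phase_swap {n : ℕ} (x : Fin n → ℝ) (j k : Fin n) : phase x k j = π - phase x j k := by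
  unfold phase
  rcases lt_trichotomy j k with h | h | h
  · rw [if_pos h, if_neg h.asymm, if_pos h]; ring
  · subst h; simp only [sub_self, lt_irrefl, if_false]; ring
  · rw [if_neg h.asymm, if_pos h, if_pos h]; ring

lemma phase_mem_Ioo {n : ℕ} {x : Fin n → ℝ} (hx : x ∈ Xspace n) (j k : Fin n) :
    phase x j k ∈ Ioo 0 π := by
  have h1 := hx.2 j k
  have h2 := hx.2 k j
  have hpi := Real.pi_pos
  unfold phase
  rcases lt_trichotomy j k with h | h | h
  · have h3 := hx.1 h
    rw [if_neg h.asymm, if_pos h]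
    constructor <;> linarith
  · subst h
    rw [if_neg (lt_irrefl _), if_neg (lt_irrefl _)]
    constructor <;> linarith
  · have h3 := hx.1 h
    rw [if_pos h]
    constructor <;> linarith

lemma mem_Xspace_of_phase {n : ℕ} {x : Fin n → ℝ} (hx : ∀ j k, phase x j k ∈ Ioo 0 π) :
    x ∈ Xspace n := by
  have hpi := Real.pi_pos
  have hlt : StrictMono x := fun k j h => by
    have h1 := (hx j k).1
    rw [phase, if_pos h] at h1
    linarith
  refine ⟨hlt, fun i j => ?_⟩
  rcases le_or_gt i j with h | h
  · have := hlt.monotone h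
    linarith
  · have h1 := (hx i j).2
    rw [phase, if_pos h] at h1
    linarith

lemma phi_eq_sum {n : ℕ} (x : Fin n → ℝ) (j : Fin n) :
    phi x j = ∑ k, Real.cot ((x j - x k) / 2) := by
  rw [phi]
  refine Finset.sum_erase _ ?_
  simp [Real.cot_eq_cos_div_sin]

lemma phi_eq_sum_phase {n : ℕ} (x : Fin n → ℝ) (j : Fin n) :
    phi x j = ∑ k, Real.cot (phase x j k) := by
  rw [phi_eq_sum]
  refine Finset.sum_congr rfl fun k _ => ?_
  unfold phase
  rcases lt_trichotomy j k with h | h | h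
  · rw [if_neg h.asymm, if_pos h, cot_periodic]
  · subst h
    simp [Real.cot_eq_cos_div_sin]
  · rw [if_pos h, add_zero]

/-! ### Contraction -/

lemma sum_mul_sum_of_antisymm {ι : Type*} [Fintype ι] {A : ι → ι → ℝ}
    (hA : ∀ j k, A k j = -A j k) (v : ι → ℝ) :
    ∑ j, v j * ∑ k, A j k = 1 / 2 * ∑ j, ∑ k, A j k * (v j - v k) := by
  have h1 : ∑ j, ∑ k, A j k * v k = -∑ j, v j * ∑ k, A j k := by
    rw [Finset.sum_comm, ← Finset.sum_neg_distrib]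
    refine Finset.sum_congr rfl fun j _ => ?_
    rw [Finset.mul_sum, ← Finset.sum_neg_distrib]
    refine Finset.sum_congr rfl fun k _ => ?_
    rw [hA j k]
    ring
  have h2 : ∑ j, ∑ k, A j k * v j = ∑ j, v j * ∑ k, A j k :=
    Finset.sum_congr rfl fun j _ => by rw [Finset.mul_sum]; simp only [mul_comm]
  simp only [mul_sub, Finset.sum_sub_distrib]
  rw [h1, h2]
  ring

lemma sum_phi {n : ℕ} (x : Fin n → ℝ) : ∑ j, phi x j = 0 := by
  have h := sum_mul_sum_of_antisymm (A := fun j k => Real.cot (phase x j k))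
    (fun j k => by rw [phase_swap, cot_pi_sub]) (fun _ => 1)
  simpa [phi_eq_sum_phase] using h

lemma sum_sum_sub_sq {n : ℕ} (δ : Fin n → ℝ) :
    ∑ j, ∑ k, (δ j - δ k) ^ 2 = 2 * n * ∑ j, δ j ^ 2 - 2 * (∑ j, δ j) ^ 2 := by
  have h : ∀ j k, (δ j - δ k) ^ 2 = δ j ^ 2 + δ k ^ 2 - 2 * (δ j * δ k) := fun j k => by ring
  simp only [h, Finset.sum_sub_distrib, Finset.sum_add_distrib, ← Finset.mul_sum,
    ← Finset.sum_mul, Finset.sum_const, Finset.card_univ, Fintype.card_fin, nsmul_eq_mul]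
  ring

lemma sum_sub_mul_phi_sub_le {n : ℕ} {x y : Fin n → ℝ} (hx : x ∈ Xspace n) (hy : y ∈ Xspace n) :
    ∑ j, (x j - y j) * (phi x j - phi y j) ≤
      -(n / 2) * ∑ j, (x j - y j) ^ 2 + 1 / 2 * (∑ j, (x j - y j)) ^ 2 := by
  have h := sum_mul_sum_of_antisymm
    (A := fun j k => Real.cot (phase x j k) - Real.cot (phase y j k))
    (fun j k => by rw [phase_swap x, phase_swap y, cot_pi_sub, cot_pi_sub]; ring)
    (fun j => x j - y j)
  simp only [Finset.sum_sub_distrib (f := fun k => Real.cot (phase x _ k)),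
    ← phi_eq_sum_phase] at h
  rw [h]
  have h2 : ∑ j, ∑ k, (Real.cot (phase x j k) - Real.cot (phase y j k)) *
      ((x j - y j) - (x k - y k)) ≤ ∑ j, ∑ k, -(1 / 2) * ((x j - y j) - (x k - y k)) ^ 2 := by
    refine Finset.sum_le_sum fun j _ => Finset.sum_le_sum fun k _ => ?_
    have h3 := sub_mul_cot_sub_le (phase_mem_Ioo hx j k) (phase_mem_Ioo hy j k)
    have h4 : (x j - y j) - (x k - y k) = 2 * (phase x j k - phase y j k) := by
      unfold phase; ring
    rw [h4]
    linarith
  simp only [← Finset.mul_sum, sum_sum_sub_sq (fun j => x j - y j)] at h2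
  linarith

/-- A differential form of Grönwall's inequality allowing decay. -/
lemma le_exp_mul_of_hasDerivWithinAt_le {f f' : ℝ → ℝ} {c T : ℝ} (hT : 0 ≤ T)
    (hf : ∀ t ∈ Icc 0 T, HasDerivWithinAt f (f' t) (Icc 0 T) t)
    (hf' : ∀ t ∈ Icc 0 T, f' t ≤ -c * f t) : f T ≤ Real.exp (-c * T) * f 0 := by
  have hg : ∀ t ∈ Icc 0 T, HasDerivWithinAt (fun t => Real.exp (c * t) * f t)
      (Real.exp (c * t) * c * f t + Real.exp (c * t) * f' t) (Icc 0 T) t := fun t ht =>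
    HasDerivWithinAt.mul (by simpa using ((hasDerivAt_id t).const_mul c).exp.hasDerivWithinAt)
      (hf t ht)
  have hanti := antitoneOn_of_hasDerivWithinAt_nonpos (convex_Icc 0 T)
    (fun t ht => (hg t ht).continuousWithinAt)
    (fun t ht => (hg t (interior_subset ht)).mono interior_subset)
    (fun t ht => by nlinarith [hf' t (interior_subset ht), Real.exp_pos (c * t)])
  have h := hanti (left_mem_Icc.2 hT) (right_mem_Icc.2 hT) hT
  simp only [mul_zero, Real.exp_zero, one_mul] at h
  calc f T = Real.exp (-c * T) * (Real.exp (c * T) * f T) := by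
        rw [← mul_assoc, ← Real.exp_add]; simp
    _ ≤ _ := by gcongr

/-- Solutions on `[0, T]` of the spiraling zero-energy flow within `𝒳ₙ`. -/
structure IsFlowOn {n : ℕ} (a ρ T : ℝ) (θ : ℝ → Fin n → ℝ) : Prop where
  mem : ∀ t ∈ Icc 0 T, θ t ∈ Xspace n
  hasDerivWithinAt : ∀ t ∈ Icc 0 T, ∀ j,
    HasDerivWithinAt (fun s => θ s j) (2 * phiA a (θ t) j + ρ) (Icc 0 T) t

lemma IsFlowOn.mono {n : ℕ} {a ρ S T : ℝ} {θ : ℝ → Fin n → ℝ} (h : IsFlowOn a ρ T θ)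
    (hST : S ≤ T) : IsFlowOn a ρ S θ :=
  have hsub : Icc 0 S ⊆ Icc 0 T := Icc_subset_Icc_right hST
  ⟨fun t ht => h.mem t (hsub ht), fun t ht j => (h.hasDerivWithinAt t (hsub ht) j).mono hsub⟩

/-- Two flows with the same initial barycentre approach each other exponentially fast. -/
lemma IsFlowOn.sum_sub_sq_le {n : ℕ} {a ρ T : ℝ} (ha : 0 < a) (hT : 0 ≤ T)
    {x y : ℝ → Fin n → ℝ} (hx : IsFlowOn a ρ T x) (hy : IsFlowOn a ρ T y)
    (h0 : ∑ j, (x 0 j - y 0 j) = 0) :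
    ∑ j, (x T j - y T j) ^ 2 ≤ Real.exp (-(a / 2 * n) * T) * ∑ j, (x 0 j - y 0 j) ^ 2 := by
  have hδ : ∀ t ∈ Icc 0 T, ∀ j, HasDerivWithinAt (fun s => x s j - y s j)
      (a / 2 * (phi (x t) j - phi (y t) j)) (Icc 0 T) t := fun t ht j => by
    convert! (hx.hasDerivWithinAt t ht j).sub (hy.hasDerivWithinAt t ht j) using 1
    simp only [phiA]
    ring
  have hS : ∀ t ∈ Icc 0 T, HasDerivWithinAt (fun s => ∑ j, (x s j - y s j)) 0 (Icc 0 T) t :=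
    fun t ht => by
      convert! HasDerivWithinAt.fun_sum (u := Finset.univ) fun j _ => hδ t ht j using 1
      rw [← Finset.mul_sum, Finset.sum_sub_distrib, sum_phi, sum_phi]
      ring
  have hS0 : ∀ t ∈ Icc 0 T, ∑ j, (x t j - y t j) = 0 := fun t ht => by
    rw [← h0]
    refine constant_of_has_deriv_right_zero (fun s hs => (hS s hs).continuousWithinAt)
      (fun s hs => ?_) t ht
    exact (hS s (Ico_subset_Icc_self hs)).mono_of_mem_nhdsWithin
      (Icc_mem_nhdsGE_of_mem hs)
  refine le_exp_mul_of_hasDerivWithinAt_le hT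
    (fun t ht => HasDerivWithinAt.fun_sum fun j _ => (hδ t ht j).fun_pow 2) fun t ht => ?_
  have h := sum_sub_mul_phi_sub_le (hx.mem t ht) (hy.mem t ht)
  rw [hS0 t ht] at h
  calc _ = a * ∑ j, (x t j - y t j) * (phi (x t) j - phi (y t) j) := by
        rw [Finset.mul_sum]
        refine Finset.sum_congr rfl fun j _ => ?_
        norm_num
        ring
    _ ≤ a * (-(n / 2) * ∑ j, (x t j - y t j) ^ 2 + 1 / 2 * 0 ^ 2) := by gcongr
    _ = _ := by ring

lemma IsFlowOn.eq_of_eq {n : ℕ} {a ρ T : ℝ} (ha : 0 < a) (hT : 0 ≤ T)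
    {x y : ℝ → Fin n → ℝ} (hx : IsFlowOn a ρ T x) (hy : IsFlowOn a ρ T y) (h0 : x 0 = y 0) :
    x T = y T := by
  have h := hx.sum_sub_sq_le ha hT hy (by simp [h0])
  simp only [h0, sub_self, ne_eq, OfNat.ofNat_ne_zero, not_false_eq_true, zero_pow,
    Finset.sum_const_zero, mul_zero] at h
  funext j
  have h2 := (Finset.sum_eq_zero_iff_of_nonneg fun j _ => sq_nonneg (x T j - y T j)).1
    (le_antisymm h (Finset.sum_nonneg fun j _ => sq_nonneg _)) j (Finset.mem_univ j)
  exact sub_eq_zero.1 (pow_eq_zero_iff two_ne_zero |>.1 h2)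

/-! ### The equally spaced configuration -/

lemma phi_equally_spaced {n : ℕ} (hn : n ≠ 0) (c : ℝ) (j : Fin n) :
    phi (fun k : Fin n => c + (k : ℕ) * (2 * π / n)) j = 0 := by
  have : NeZero n := ⟨hn⟩
  have hn' : (n : ℝ) ≠ 0 := Nat.cast_ne_zero.2 hn
  have hsum := phi_eq_sum (fun k : Fin n => c + (k : ℕ) * (2 * π / n)) j
  have hrefl : ∑ k : Fin n, Real.cot ((c + (j : ℕ) * (2 * π / n) - (c + (k : ℕ) * (2 * π / n))) / 2)
      = -∑ k : Fin n,
        Real.cot ((c + (j : ℕ) * (2 * π / n) - (c + (k : ℕ) * (2 * π / n))) / 2) := by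
    rw [← Finset.sum_neg_distrib]
    refine Fintype.sum_equiv (Equiv.subLeft (j + j)) _ _ fun k => ?_
    obtain ⟨m, hm⟩ : ∃ m : ℤ, (((j + j - k : Fin n) : ℕ) : ℤ) = j + j - k + m * n := by
      have h : (((j + j - k : Fin n) : ℕ) : ℤ) ≡ j + j - k [ZMOD n] := by
        rw [Fin.sub_def, Fin.add_def]
        push_cast [Nat.cast_sub k.isLt.le]
        refine (Int.mod_modEq _ _).trans ?_
        have h1 : ((j : ℤ) + j) % n ≡ j + j [ZMOD n] := Int.mod_modEq _ _
        have h2 : (n : ℤ) - k ≡ -k [ZMOD n] := by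
          have := (Int.modEq_zero_iff_dvd.2 (dvd_refl (n : ℤ))).sub_right (k : ℤ)
          simpa using this
        have := h2.add h1
        rwa [neg_add_eq_sub] at this
      obtain ⟨m, hm⟩ := h.symm.dvd
      exact ⟨m, by linarith⟩
    have hm' : (((j + j - k : Fin n) : ℕ) : ℝ) = (j : ℕ) + (j : ℕ) - (k : ℕ) + m * n := by
      exact_mod_cast hm
    rw [Equiv.subLeft_apply, hm', ← cot_neg, ← cot_periodic.sub_zsmul_eq (-m)]
    congr 1
    rw [zsmul_eq_mul]
    push_cast
    field_simp
    ring
  rw [hsum]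
  linarith

lemma equally_spaced_mem_Xspace {n : ℕ} (c : ℝ) :
    (fun k : Fin n => c + (k : ℕ) * (2 * π / n)) ∈ Xspace n := by
  refine ⟨fun i j hij => ?_, fun i j => ?_⟩
  · have hn : (0 : ℝ) < n := Nat.cast_pos.2 i.pos
    have : ((i : ℕ) : ℝ) < (j : ℕ) := Nat.cast_lt.2 hij
    have hpos : 0 < 2 * π / n := by positivity
    simpa using mul_lt_mul_of_pos_right this hpos
  · have hn : (0 : ℝ) < n := Nat.cast_pos.2 i.pos
    have hi : ((i : ℕ) : ℝ) < n := Nat.cast_lt.2 i.isLt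
    have hpos : 0 < 2 * π / n := by positivity
    have h1 : ((i : ℕ) : ℝ) * (2 * π / n) < n * (2 * π / n) := mul_lt_mul_of_pos_right hi hpos
    have h2 : (n : ℝ) * (2 * π / n) = 2 * π := by field_simp
    have h3 : 0 ≤ ((j : ℕ) : ℝ) * (2 * π / n) := by positivity
    simp only
    linarith

lemma isFlowOn_equally_spaced {n : ℕ} (hn : n ≠ 0) (a ρ T ζ : ℝ) :
    IsFlowOn a ρ T (fun t (k : Fin n) => (ρ * t + ζ) + (k : ℕ) * (2 * π / n)) where
  mem _ _ := equally_spaced_mem_Xspace _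
  hasDerivWithinAt t _ j := by
    rw [phiA, phi_equally_spaced hn]
    have h : HasDerivAt (fun s => (ρ * s + ζ) + (j : ℕ) * (2 * π / n)) (ρ * 1) t :=
      (((hasDerivAt_id t).const_mul ρ).add_const ζ).add_const _
    convert! h.hasDerivWithinAt using 1
    ring

/-- Exponential convergence to the equally spaced configuration with the same barycentre. -/
lemma IsFlowOn.abs_sub_equally_spaced_le {n : ℕ} (hn : n ≠ 0) {a ρ T : ℝ} (ha : 0 < a)
    (hT : 0 ≤ T) {θ : ℝ → Fin n → ℝ} (h : IsFlowOn a ρ T θ) {ζ : ℝ}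
    (hζ : ∑ j, (θ 0 j - (ζ + (j : ℕ) * (2 * π / n))) = 0) (j : Fin n) :
    |θ T j - ρ * T - (ζ + (j : ℕ) * (2 * π / n))| ≤
      √(∑ j, (θ 0 j - (ζ + (j : ℕ) * (2 * π / n))) ^ 2) * Real.exp (-(a / 4) * n * T) := by
  have hle := h.sum_sub_sq_le ha hT (isFlowOn_equally_spaced hn a ρ T ζ) (by simpa using hζ)
  simp only [mul_zero, zero_add] at hle
  refine abs_le_of_sq_le_sq ?_ (by positivity)
  rw [mul_pow, Real.sq_sqrt (Finset.sum_nonneg fun j _ => sq_nonneg _), ← Real.exp_nat_mul]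
  calc (θ T j - ρ * T - (ζ + (j : ℕ) * (2 * π / n))) ^ 2
      = (θ T j - (ρ * T + ζ + (j : ℕ) * (2 * π / n))) ^ 2 := by ring
    _ ≤ ∑ j : Fin n, (θ T j - (ρ * T + ζ + (j : ℕ) * (2 * π / n))) ^ 2 :=
        Finset.single_le_sum
          (f := fun j : Fin n => (θ T j - (ρ * T + ζ + (j : ℕ) * (2 * π / n))) ^ 2)
          (fun j _ => sq_nonneg _) (Finset.mem_univ j)
    _ ≤ _ := hle
    _ = _ := by
        rw [mul_comm]
        congr 2
        push_cast
        ring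

/-! ### The truncated cotangent and its potential -/

/-- The cotangent, frozen outside of `[η, π - η]`. -/
def truncCot (η u : ℝ) : ℝ := Real.cot (max η (min u (π - η)))

lemma clamp_mem {η : ℝ} (hη : η ≤ π / 2) (u : ℝ) : max η (min u (π - η)) ∈ Icc η (π - η) :=
  ⟨le_max_left _ _, max_le (by linarith) (min_le_right _ _)⟩

lemma clamp_eq {η u : ℝ} (hu : u ∈ Icc η (π - η)) : max η (min u (π - η)) = u := by
  rw [min_eq_left hu.2, max_eq_right hu.1]

lemma truncCot_eq {η u : ℝ} (hu : u ∈ Icc η (π - η)) : truncCot η u = Real.cot u := by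
  rw [truncCot, clamp_eq hu]

lemma sin_pos_of_mem {η u : ℝ} (hη : 0 < η) (hu : u ∈ Icc η (π - η)) : 0 < Real.sin u :=
  Real.sin_pos_of_pos_of_lt_pi (by linarith [hu.1]) (by linarith [hu.2])

lemma truncCot_pi_sub {η : ℝ} (hη : η ≤ π / 2) (u : ℝ) :
    truncCot η (π - u) = -truncCot η u := by
  rw [truncCot, truncCot, ← cot_pi_sub]
  congr 1
  rcases le_total u η with h1 | h1 <;> rcases le_total u (π - η) with h2 | h2
  · rw [min_eq_right (by linarith : π - η ≤ π - u), max_eq_right (by linarith), min_eq_left h2,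
      max_eq_left h1]
  · rw [min_eq_right (by linarith : π - η ≤ π - u), max_eq_right (by linarith), min_eq_right h2,
      max_eq_right (by linarith)]
    linarith
  · rw [min_eq_left (by linarith : π - u ≤ π - η), max_eq_right (by linarith), min_eq_left h2,
      max_eq_right h1]
  · rw [min_eq_left (by linarith : π - u ≤ π - η), max_eq_left (by linarith), min_eq_right h2,
      max_eq_right (by linarith)]
    ring

lemma continuousOn_cot {η : ℝ} (hη : 0 < η) : ContinuousOn Real.cot (Icc η (π - η)) :=
  fun _ hu => (hasDerivAt_cot (sin_pos_of_mem hη hu).ne').continuousAt.continuousWithinAt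

lemma exists_abs_truncCot_le {η : ℝ} (hη : 0 < η) (hη' : η ≤ π / 2) :
    ∃ L : ℝ, 0 ≤ L ∧ ∀ u, |truncCot η u| ≤ L := by
  obtain ⟨L, hL⟩ := isCompact_Icc.exists_bound_of_continuousOn (continuousOn_cot hη)
  exact ⟨L, (norm_nonneg _).trans (hL _ (clamp_mem hη' 0)), fun u => hL _ (clamp_mem hη' u)⟩

lemma exists_abs_truncCot_sub_le {η : ℝ} (hη : 0 < η) (hη' : η ≤ π / 2) :
    ∃ K : ℝ, 0 ≤ K ∧ ∀ u v, |truncCot η u - truncCot η v| ≤ K * |u - v| := by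
  obtain ⟨L, hL0, hL⟩ := exists_abs_truncCot_le hη hη'
  have hbound : ∀ u ∈ Icc η (π - η), ‖-(1 + Real.cot u ^ 2)‖ ≤ 1 + L ^ 2 := fun u hu => by
    have h := hL u
    rw [truncCot_eq hu] at h
    rw [norm_neg, Real.norm_of_nonneg (by positivity)]
    gcongr 1 + ?_
    exact sq_le_sq' (abs_le.1 h).1 (abs_le.1 h).2
  refine ⟨1 + L ^ 2, by positivity, fun u v => ?_⟩
  have h := (convex_Icc η (π - η)).norm_image_sub_le_of_norm_hasDerivWithin_le
    (fun w hw => (hasDerivAt_cot (sin_pos_of_mem hη hw).ne').hasDerivWithinAt) hbound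
    (clamp_mem hη' v) (clamp_mem hη' u)
  refine h.trans ?_
  gcongr
  exact (abs_max_sub_max_le_max _ _ _ _).trans (max_le (by simp)
    ((abs_min_sub_min_le_max _ _ _ _).trans (max_le le_rfl (by simp))))

lemma continuous_truncCot {η : ℝ} (hη : 0 < η) (hη' : η ≤ π / 2) : Continuous (truncCot η) :=
  (continuousOn_cot hη).comp_continuous (by fun_prop) (clamp_mem hη')

lemma truncCot_nonneg {η u : ℝ} (hη : 0 < η) (hη' : η ≤ π / 2) (hu : u ≤ π / 2) :
    0 ≤ truncCot η u := by
  have h := clamp_mem hη' u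
  rw [truncCot, Real.cot_eq_cos_div_sin]
  refine div_nonneg (Real.cos_nonneg_of_neg_pi_div_two_le_of_le ?_ ?_) (sin_pos_of_mem hη h).le
  · linarith [h.1, Real.pi_pos]
  · exact max_le hη' ((min_le_left _ _).trans hu)

lemma truncCot_nonpos {η u : ℝ} (hη : 0 < η) (hη' : η ≤ π / 2) (hu : π / 2 ≤ u) :
    truncCot η u ≤ 0 := by
  have h := truncCot_nonneg hη hη' (by linarith : π - u ≤ π / 2)
  rw [truncCot_pi_sub hη'] at h
  linarith

/-- The convex potential of `truncCot η`: minus its primitive vanishing at `π / 2`. -/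
def truncPot (η u : ℝ) : ℝ := -∫ s in (π / 2)..u, truncCot η s

lemma hasDerivAt_truncPot {η : ℝ} (hη : 0 < η) (hη' : η ≤ π / 2) (u : ℝ) :
    HasDerivAt (truncPot η) (-truncCot η u) u :=
  have hc := continuous_truncCot hη hη'
  (intervalIntegral.integral_hasDerivAt_right (hc.intervalIntegrable _ _)
    hc.aestronglyMeasurable.stronglyMeasurableAtFilter hc.continuousAt).neg

lemma antitoneOn_truncPot {η : ℝ} (hη : 0 < η) (hη' : η ≤ π / 2) :
    AntitoneOn (truncPot η) (Iic (π / 2)) :=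
  antitoneOn_of_hasDerivWithinAt_nonpos (convex_Iic _)
    (fun u _ => (hasDerivAt_truncPot hη hη' u).continuousAt.continuousWithinAt)
    (fun u _ => (hasDerivAt_truncPot hη hη' u).hasDerivWithinAt)
    (fun _ hu => neg_nonpos.2 (truncCot_nonneg hη hη' (mem_Iic.1 (interior_subset hu))))

lemma monotoneOn_truncPot {η : ℝ} (hη : 0 < η) (hη' : η ≤ π / 2) :
    MonotoneOn (truncPot η) (Ici (π / 2)) :=
  monotoneOn_of_hasDerivWithinAt_nonneg (convex_Ici _)
    (fun u _ => (hasDerivAt_truncPot hη hη' u).continuousAt.continuousWithinAt)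
    (fun u _ => (hasDerivAt_truncPot hη hη' u).hasDerivWithinAt)
    (fun _ hu => neg_nonneg.2 (truncCot_nonpos hη hη' (mem_Ici.1 (interior_subset hu))))

lemma truncPot_nonneg {η : ℝ} (hη : 0 < η) (hη' : η ≤ π / 2) (u : ℝ) : 0 ≤ truncPot η u := by
  have h0 : truncPot η (π / 2) = 0 := by simp [truncPot]
  rw [← h0]
  rcases le_total u (π / 2) with h | h
  · exact antitoneOn_truncPot hη hη' h (mem_Iic.2 le_rfl) h
  · exact monotoneOn_truncPot hη hη' (mem_Ici.2 le_rfl) h h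

lemma truncPot_eq {η u : ℝ} (hη : 0 < η) (hη' : η ≤ π / 2) (hu : u ∈ Icc η (π - η)) :
    truncPot η u = -Real.log (Real.sin u) := by
  have hsub : uIcc (π / 2) u ⊆ Icc η (π - η) :=
    uIcc_subset_Icc ⟨hη', by linarith⟩ hu
  rw [truncPot, intervalIntegral.integral_eq_sub_of_hasDerivAt (f := fun s => Real.log (Real.sin s))
    (fun s hs => ?_) ((continuous_truncCot hη hη').intervalIntegrable _ _)]
  · simp
  · rw [truncCot_eq (hsub hs), Real.cot_eq_cos_div_sin]
    exact (Real.hasDerivAt_sin s).log (ne_of_gt (sin_pos_of_mem hη (hsub hs)))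

/-- Sublevel sets of the potential below its value at the truncation level. -/
lemma mem_Ioo_of_truncPot_lt {η u : ℝ} (hη : 0 < η) (hη' : η ≤ π / 2)
    (hu : truncPot η u < -Real.log (Real.sin η)) : u ∈ Ioo η (π - η) := by
  constructor
  · by_contra! h
    have h1 := antitoneOn_truncPot hη hη' (mem_Iic.2 (h.trans hη')) (mem_Iic.2 hη') h
    rw [truncPot_eq hη hη' ⟨le_rfl, by linarith⟩] at h1
    linarith
  · by_contra! h
    have h0 : π / 2 ≤ π - η := by linarith
    have h1 := monotoneOn_truncPot hη hη' (mem_Ici.2 h0) (mem_Ici.2 (h0.trans h)) h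
    rw [truncPot_eq hη hη' ⟨by linarith, le_rfl⟩, Real.sin_pi_sub] at h1
    linarith

/-! ### Global existence -/

lemma exists_solution_Icc {E : Type*} [NormedAddCommGroup E] [NormedSpace ℝ E] [CompleteSpace E]
    {f : E → E} {K L : NNReal} (hK : LipschitzWith K f) (hL : ∀ x, ‖f x‖ ≤ L) {T : ℝ} (hT : 0 ≤ T)
    (x₀ : E) :
    ∃ α : ℝ → E, α 0 = x₀ ∧ ∀ t ∈ Icc 0 T, HasDerivWithinAt α (f (α t)) (Icc 0 T) t := by
  have h : IsPicardLindelof (fun _ => f) (⟨0, left_mem_Icc.2 hT⟩ : Icc 0 T) x₀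
      (L * T.toNNReal) 0 L K := by
    refine IsPicardLindelof.of_time_independent (fun x _ => hL x) hK.lipschitzOnWith ?_
    simp [hT]
  exact h.exists_eq_forall_mem_Icc_hasDerivWithinAt₀

/-- The vector field of the flow with truncated cotangents. -/
def truncField {n : ℕ} (a ρ η : ℝ) (x : Fin n → ℝ) (j : Fin n) : ℝ :=
  a / 2 * (∑ k, truncCot η (phase x j k)) + ρ

lemma exists_norm_truncField_le {n : ℕ} (a ρ : ℝ) {η : ℝ} (hη : 0 < η) (hη' : η ≤ π / 2) :
    ∃ L : NNReal, ∀ x : Fin n → ℝ, ‖truncField a ρ η x‖ ≤ L := by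
  obtain ⟨L, hL0, hL⟩ := exists_abs_truncCot_le hη hη'
  refine ⟨⟨|a / 2| * (n * L) + |ρ|, by positivity⟩, fun x => ?_⟩
  refine (pi_norm_le_iff_of_nonneg (NNReal.coe_nonneg _)).2 fun j => ?_
  refine (abs_add_le _ _).trans ?_
  rw [abs_mul]
  change _ ≤ |a / 2| * (n * L) + |ρ|
  gcongr
  refine (Finset.abs_sum_le_sum_abs _ _).trans ?_
  refine (Finset.sum_le_sum fun k _ => hL (phase x j k)).trans ?_
  simp

lemma exists_lipschitzWith_truncField {n : ℕ} (a ρ : ℝ) {η : ℝ} (hη : 0 < η) (hη' : η ≤ π / 2) :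
    ∃ K : NNReal, LipschitzWith K (truncField (n := n) a ρ η) := by
  obtain ⟨K, hK0, hK⟩ := exists_abs_truncCot_sub_le hη hη'
  refine ⟨⟨|a / 2| * (n * K), by positivity⟩, LipschitzWith.of_dist_le_mul fun x y => ?_⟩
  refine (dist_pi_le_iff (mul_nonneg (NNReal.coe_nonneg _) dist_nonneg)).2 fun j => ?_
  have hphase : ∀ k, |phase x j k - phase y j k| ≤ dist x y := fun k => by
    have h1 := dist_le_pi_dist x y j
    have h2 := dist_le_pi_dist x y k
    rw [Real.dist_eq, abs_le] at h1 h2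
    have h3 : phase x j k - phase y j k = ((x j - y j) - (x k - y k)) / 2 := by
      unfold phase; ring
    rw [h3, abs_le]
    constructor <;> linarith
  have h4 : truncField a ρ η x j - truncField a ρ η y j =
      a / 2 * ∑ k, (truncCot η (phase x j k) - truncCot η (phase y j k)) := by
    rw [Finset.sum_sub_distrib, truncField, truncField]
    ring
  rw [Real.dist_eq, h4, abs_mul]
  change _ ≤ |a / 2| * (n * K) * dist x y
  rw [mul_assoc]
  gcongr
  refine (Finset.abs_sum_le_sum_abs _ _).trans ?_
  calc ∑ k, |truncCot η (phase x j k) - truncCot η (phase y j k)|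
      ≤ ∑ _k : Fin n, K * dist x y := Finset.sum_le_sum fun k _ => (hK _ _).trans (by
        gcongr
        exact hphase k)
    _ = _ := by simp [mul_assoc]

/-- The truncated interaction energy decreases along the truncated flow. -/
lemma sum_truncPot_le {n : ℕ} {a ρ η T : ℝ} (ha : 0 < a) (hη : 0 < η) (hη' : η ≤ π / 2)
    (hT : 0 ≤ T) {x : ℝ → Fin n → ℝ}
    (hx : ∀ t ∈ Icc 0 T, ∀ j,
      HasDerivWithinAt (fun s => x s j) (truncField a ρ η (x t) j) (Icc 0 T) t) :
    ∑ j, ∑ k, truncPot η (phase (x T) j k) ≤ ∑ j, ∑ k, truncPot η (phase (x 0) j k) := by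
  have hphase : ∀ t ∈ Icc 0 T, ∀ j k, HasDerivWithinAt (fun s => phase (x s) j k)
      ((truncField a ρ η (x t) j - truncField a ρ η (x t) k) / 2) (Icc 0 T) t :=
    fun t ht j k => (((hx t ht j).sub (hx t ht k)).div_const 2).add_const _
  have hE := fun t ht => HasDerivWithinAt.fun_sum (u := Finset.univ) fun (j : Fin n) _ =>
    HasDerivWithinAt.fun_sum (u := Finset.univ) fun (k : Fin n) _ =>
      (hasDerivAt_truncPot hη hη' (phase (x t) j k)).comp_hasDerivWithinAt t (hphase t ht j k)
  have h := le_exp_mul_of_hasDerivWithinAt_le (c := 0) hT hE fun t ht => ?_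
  · simpa using h
  · have hs := sum_mul_sum_of_antisymm (A := fun j k => truncCot η (phase (x t) j k))
      (fun j k => by rw [phase_swap, truncCot_pi_sub hη'])
      (fun j => a / 2 * ∑ k, truncCot η (phase (x t) j k))
    have h1 : ∑ j, ∑ k, -truncCot η (phase (x t) j k) *
        ((truncField a ρ η (x t) j - truncField a ρ η (x t) k) / 2) =
        -∑ j, (a / 2 * ∑ k, truncCot η (phase (x t) j k)) *
          ∑ k, truncCot η (phase (x t) j k) := by
      rw [hs, Finset.mul_sum, ← Finset.sum_neg_distrib]
      refine Finset.sum_congr rfl fun j _ => ?_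
      rw [Finset.mul_sum, ← Finset.sum_neg_distrib]
      refine Finset.sum_congr rfl fun k _ => ?_
      simp only [truncField]
      ring
    rw [h1, neg_zero, zero_mul, neg_nonpos]
    refine Finset.sum_nonneg fun j _ => ?_
    rw [mul_assoc]
    exact mul_nonneg (by positivity) (mul_self_nonneg _)

/-- A truncation level compatible with the initial configuration and its energy. -/
lemma exists_truncation_level {n : ℕ} {x : Fin n → ℝ} (hx : x ∈ Xspace n) :
    ∃ η, 0 < η ∧ η ≤ π / 2 ∧ (∀ j k, phase x j k ∈ Icc η (π - η)) ∧
      ∑ j, ∑ k, -Real.log (Real.sin (phase x j k)) < -Real.log (Real.sin η) := by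
  have h1 : ∀ᶠ η in 𝓝[>] (0 : ℝ), η < π / 2 :=
    eventually_nhdsWithin_of_eventually_nhds (eventually_lt_nhds (by positivity))
  have h2 : ∀ᶠ η in 𝓝[>] (0 : ℝ), ∀ j k, η < phase x j k ∧ η < π - phase x j k := by
    refine eventually_all.2 fun j => eventually_all.2 fun k => ?_
    have h := phase_mem_Ioo hx j k
    exact eventually_nhdsWithin_of_eventually_nhds
      ((eventually_lt_nhds h.1).and (eventually_lt_nhds (sub_pos.2 h.2)))
  have hsin : Tendsto Real.sin (𝓝[>] 0) (𝓝[>] 0) := by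
    refine tendsto_nhdsWithin_iff.2 ⟨?_, ?_⟩
    · simpa using (Real.continuous_sin.tendsto 0).mono_left nhdsWithin_le_nhds
    · filter_upwards [h1, self_mem_nhdsWithin] with η hη hη0
      exact Real.sin_pos_of_pos_of_lt_pi hη0 (by linarith [Real.pi_pos])
  have h3 := (Real.tendsto_log_nhdsGT_zero.comp hsin).eventually_lt_atBot
    (-∑ j, ∑ k, -Real.log (Real.sin (phase x j k)))
  obtain ⟨η, hη1, hη2, hη3, hη0⟩ := (h1.and (h2.and (h3.and self_mem_nhdsWithin))).exists
  refine ⟨η, hη0, hη1.le, fun j k => ⟨(hη2 j k).1.le, by linarith [(hη2 j k).2]⟩, ?_⟩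
  rw [Function.comp_apply] at hη3
  linarith

lemma exists_isFlowOn {n : ℕ} {a : ℝ} (ha : 0 < a) (ρ : ℝ) {x₀ : Fin n → ℝ}
    (hx₀ : x₀ ∈ Xspace n) {T : ℝ} (hT : 0 ≤ T) :
    ∃ x : ℝ → Fin n → ℝ, x 0 = x₀ ∧ IsFlowOn a ρ T x := by
  obtain ⟨η, hη, hη', hmem, hlt⟩ := exists_truncation_level hx₀
  obtain ⟨L, hL⟩ := exists_norm_truncField_le (n := n) a ρ hη hη'
  obtain ⟨K, hK⟩ := exists_lipschitzWith_truncField (n := n) a ρ hη hη'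
  obtain ⟨x, hx0, hx⟩ := exists_solution_Icc hK hL hT x₀
  have hcoord : ∀ t ∈ Icc 0 T, ∀ j,
      HasDerivWithinAt (fun s => x s j) (truncField a ρ η (x t) j) (Icc 0 T) t :=
    fun t ht => hasDerivWithinAt_pi.1 (hx t ht)
  have hphase : ∀ t ∈ Icc 0 T, ∀ j k, phase (x t) j k ∈ Ioo η (π - η) := fun t ht j k => by
    have hsub : Icc 0 t ⊆ Icc 0 T := Icc_subset_Icc_right ht.2
    have hE := sum_truncPot_le ha hη hη' ht.1
      fun s hs j => (hcoord s (hsub hs) j).mono hsub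
    rw [hx0] at hE
    simp only [truncPot_eq hη hη' (hmem _ _)] at hE
    refine mem_Ioo_of_truncPot_lt hη hη' (lt_of_le_of_lt ?_ (hE.trans_lt hlt))
    exact (Finset.single_le_sum (f := fun k => truncPot η (phase (x t) j k))
      (fun k _ => truncPot_nonneg hη hη' _) (Finset.mem_univ k)).trans
      (Finset.single_le_sum (f := fun j => ∑ k, truncPot η (phase (x t) j k))
        (fun j _ => Finset.sum_nonneg fun k _ => truncPot_nonneg hη hη' _) (Finset.mem_univ j))
  refine ⟨x, hx0, fun t ht => mem_Xspace_of_phase fun j k => ?_, fun t ht j => ?_⟩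
  · exact Ioo_subset_Ioo hη.le (by linarith) (hphase t ht j k)
  · convert! hcoord t ht j using 1
    simp only [truncField, truncCot_eq (Ioo_subset_Icc_self (hphase t ht j _)),
      ← phi_eq_sum_phase, phiA]
    ring

lemma exists_global_flow {n : ℕ} {a : ℝ} (ha : 0 < a) (ρ : ℝ) {x₀ : Fin n → ℝ}
    (hx₀ : x₀ ∈ Xspace n) :
    ∃ θ : ℝ → Fin n → ℝ, θ 0 = x₀ ∧ ∀ T, IsFlowOn a ρ T θ := by
  choose! α hα0 hα using fun T (hT : 0 ≤ T) => exists_isFlowOn ha ρ hx₀ hT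
  have heq : ∀ T, ∀ t ∈ Icc 0 T, α t t = α T t := fun T t ht =>
    (hα t ht.1).eq_of_eq ha ht.1 ((hα T (ht.1.trans ht.2)).mono ht.2)
      ((hα0 t ht.1).trans (hα0 T (ht.1.trans ht.2)).symm)
  refine ⟨fun t => α t t, hα0 0 le_rfl, fun T => ⟨fun t ht => ?_, fun t ht j => ?_⟩⟩
  · exact (hα t ht.1).mem t (right_mem_Icc.2 ht.1)
  · have h := (hα T (ht.1.trans ht.2)).hasDerivWithinAt t ht j
    simp only [heq T t ht]
    exact h.congr_of_mem (fun s hs => congrFun (heq T s hs) j) ht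

/-- For any `θ₀ ∈ 𝒳ₙ`, the spiraling zero-energy flow
`dθ^j/dt = 2 φ_a^j(θ) + ρ` has a unique solution in `𝒳ₙ`, and `θ_t - ρt(1,…,1)`
converges exponentially fast, with rate `(a/4) n`, to an equally spaced configuration
`(ζ, ζ + 2π/n, …, ζ + (n-1)2π/n)`. -/
theorem spiral_zero_energy_flow
    (n : ℕ) (hn : 2 ≤ n) (a ρ : ℝ) (ha : 0 < a)
    (θ₀ : Fin n → ℝ) (h₀ : θ₀ ∈ Xspace n) :
    ∃ θ : ℝ → Fin n → ℝ,
      (θ 0 = θ₀ ∧ (∀ t ∈ Ici (0 : ℝ), θ t ∈ Xspace n) ∧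
        ∀ t ∈ Ici (0 : ℝ), ∀ j : Fin n,
          HasDerivWithinAt (fun s => θ s j) (2 * phiA a (θ t) j + ρ) (Ici 0) t) ∧
      (∀ θ' : ℝ → Fin n → ℝ,
        (θ' 0 = θ₀ ∧ (∀ t ∈ Ici (0 : ℝ), θ' t ∈ Xspace n) ∧
          ∀ t ∈ Ici (0 : ℝ), ∀ j : Fin n,
            HasDerivWithinAt (fun s => θ' s j) (2 * phiA a (θ' t) j + ρ) (Ici 0) t) →
        ∀ t ∈ Ici (0 : ℝ), θ' t = θ t) ∧
      ∃ ζ C : ℝ, 0 ≤ C ∧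
        ∀ t ∈ Ici (0 : ℝ), ∀ j : Fin n,
          |θ t j - ρ * t - (ζ + (j : ℕ) * (2 * π / n))| ≤
            C * Real.exp (-(a / 4) * n * t) := by
  have hn0 : n ≠ 0 := by omega
  obtain ⟨θ, hθ0, hθ⟩ := exists_global_flow ha ρ h₀
  refine ⟨θ, ⟨hθ0, fun t ht => (hθ t).mem t (right_mem_Icc.2 ht), fun t ht j => ?_⟩,
    fun θ' hθ' t ht => ?_, ?_⟩
  · refine ((hθ (t + 1)).hasDerivWithinAt t ⟨ht, by linarith⟩ j).mono_of_mem_nhdsWithin ?_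
    rw [← Ici_inter_Iic]
    exact inter_mem_nhdsWithin _ (Iic_mem_nhds (by linarith))
  · obtain ⟨h0, hmem, hderiv⟩ := hθ'
    have h : IsFlowOn a ρ t θ' :=
      ⟨fun s hs => hmem s hs.1, fun s hs j => (hderiv s hs.1 j).mono Icc_subset_Ici_self⟩
    exact h.eq_of_eq ha ht (hθ t) (h0.trans hθ0.symm)
  · refine ⟨1 / n * ∑ j : Fin n, (θ 0 j - (j : ℕ) * (2 * π / n)), _, Real.sqrt_nonneg _,
      fun t ht j => (hθ t).abs_sub_equally_spaced_le hn0 ha ht ?_ j⟩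
    have hn' : (n : ℝ) ≠ 0 := Nat.cast_ne_zero.2 hn0
    simp only [sub_add_eq_sub_sub_swap]
    rw [Finset.sum_sub_distrib, Finset.sum_const, Finset.card_univ, Fintype.card_fin,
      nsmul_eq_mul, ← mul_assoc, mul_one_div_cancel hn', one_mul, sub_self]

end
end

section
/- Finite-energy systems with polynomially slow convergence. Fix ε ∈ (0, π/2) and suppose θ = (θ¹, θ²) : [0,∞) → 𝒳₂ is differentiable with θ¹_0 = 0, θ²_0 = π and satisfies dθ¹_t/dt = 2·cot((θ¹_t − θ²_t)/2) − ε/(t+1) and dθ²_t/dt = 2·cot((θ²_t − θ¹_t)/2) for all t ≥ 0. Then the multiradial Dirichlet energy satisfies J(θ) = ε²/2, and for all t ≥ 0 one has (θ²_t − θ¹_t) − π ≥ ε·(1 − e^{−4t})/(4(t+1)) ≥ 0; in particular d(θ_t) ≥ ε·(1 − e^{−4t})/(4(t+1)), so the convergence to the equally spaced configuration is at most polynomially fast although the energy ε²/2 can be made arbitrarily small. -/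
open MeasureTheory Filter Set
open scoped Real Topology ENNReal Classical

noncomputable section

/-- A path whose coordinates have continuous derivatives on `[0, ∞)` is absolutely continuous. -/
lemma absCont_of_hasDerivWithinAt {n : ℕ} {θ v : ℝ → Fin n → ℝ}
    (hd : ∀ j, ∀ t ∈ Ici (0 : ℝ), HasDerivWithinAt (fun s => θ s j) (v t j) (Ici 0) t)
    (hv : ∀ j, ContinuousOn (fun t => v t j) (Ici 0)) (T : ℝ) : AbsCont T θ := by
  refine ⟨v, fun j => ((hv j).mono Icc_subset_Ici_self).integrableOn_Icc, fun t ht j => ?_⟩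
  have hcont : ContinuousOn (fun s => θ s j) (Icc 0 t) := fun s hs =>
    (hd j s hs.1).continuousWithinAt.mono Icc_subset_Ici_self
  have hint : IntervalIntegrable (fun s => v s j) volume 0 t :=
    ((hv j).mono (by rw [uIcc_of_le ht.1]; exact Icc_subset_Ici_self)).intervalIntegrable
  rw [intervalIntegral.integral_eq_sub_of_hasDerivAt_of_le ht.1 hcont
    (fun s hs => (hd j s hs.1.le).hasDerivAt (Ici_mem_nhds hs.1)) hint]
  ring

lemma lintegral_sq_div_add_one (ε : ℝ) {T : ℝ} (hT : 0 ≤ T) :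
    ∫⁻ s in Ioc (0 : ℝ) T, ENNReal.ofReal ((ε / (s + 1)) ^ 2) =
      ENNReal.ofReal (ε ^ 2 * (1 - (T + 1)⁻¹)) := by
  have hcont : ContinuousOn (fun s : ℝ => (ε / (s + 1)) ^ 2) (Icc 0 T) := by
    refine (continuousOn_const.div (by fun_prop) fun s hs => ?_).pow 2
    have := hs.1
    positivity
  rw [← ofReal_integral_eq_lintegral_ofReal
    (hcont.integrableOn_Icc.mono_set Ioc_subset_Icc_self) (ae_of_all _ fun s => sq_nonneg _),
    ← intervalIntegral.integral_of_le hT]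
  congr 1
  rw [intervalIntegral.integral_eq_sub_of_hasDerivAt (f := fun s => -ε ^ 2 * (s + 1)⁻¹)]
  · simp only [zero_add, inv_one]
    ring
  · intro s hs
    rw [uIcc_of_le hT] at hs
    have hne : s + 1 ≠ 0 := by linarith [hs.1]
    refine ((((hasDerivAt_id s).add_const 1).inv hne).const_mul (-ε ^ 2)).congr_deriv ?_
    simp only [id]
    field_simp
  · exact ContinuousOn.intervalIntegrable (by rwa [uIcc_of_le hT])

lemma neg_le_cot_pi_add_div_two {z : ℝ} (h0 : 0 ≤ z) (h1 : z ≤ 1) :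
    -z ≤ Real.cot ((π + z) / 2) := by
  have hcos : 1 / 2 ≤ Real.cos (z / 2) := by
    nlinarith [Real.one_sub_sq_div_two_le_cos (x := z / 2)]
  have hsin : Real.sin (z / 2) ≤ z / 2 := Real.sin_le (by linarith)
  rw [Real.cot_eq_cos_div_sin, show (π + z) / 2 = z / 2 + π / 2 by ring,
    Real.cos_add_pi_div_two, Real.sin_add_pi_div_two, le_div_iff₀ (by linarith)]
  nlinarith

/-- The explicit lower barrier: any solution of `x' = 4 cot ((π + x) / 2) + ε / (t + 1)` started
at `0` dominates `ε (1 - e^{-4t}) / (4 (t + 1))`. -/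
lemma le_of_hasDerivWithinAt_cot {ε : ℝ} (h0 : 0 < ε) (h4 : ε ≤ 4) {x : ℝ → ℝ}
    (hx0 : x 0 = 0)
    (hx : ∀ t ∈ Ici (0 : ℝ),
      HasDerivWithinAt x (4 * Real.cot ((π + x t) / 2) + ε / (t + 1)) (Ici 0) t)
    {t : ℝ} (ht : 0 ≤ t) : ε * (1 - Real.exp (-4 * t)) / (4 * (t + 1)) ≤ x t := by
  set y : ℝ → ℝ := fun t => ε * (1 - Real.exp (-4 * t)) / (4 * (t + 1)) with hy
  have hy_nonneg : ∀ s, 0 ≤ s → 0 ≤ y s := fun s hs => by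
    have : Real.exp (-4 * s) ≤ 1 := Real.exp_le_one_iff.2 (by linarith)
    exact div_nonneg (mul_nonneg h0.le (by linarith)) (by linarith)
  have hy_le : ∀ s, 0 ≤ s → y s ≤ 1 := fun s hs => by
    have := Real.exp_pos (-4 * s)
    refine (div_le_one (by linarith)).2 ?_
    nlinarith
  have hy_deriv : ∀ s, 0 ≤ s →
      HasDerivAt y (-4 * y s + ε / (s + 1) - y s / (s + 1)) s := fun s hs => by
    have hne : s + 1 ≠ 0 := by linarith
    have hexp := (((hasDerivAt_id s).const_mul (-4)).exp.const_sub 1).const_mul ε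
    refine (hexp.div (((hasDerivAt_id s).add_const 1).const_mul 4)
      (mul_ne_zero four_ne_zero hne)).congr_deriv ?_
    simp only [hy, id]
    field_simp
    ring
  -- Shrinking the barrier by a factor `c < 1` makes the differential inequality strict.
  have hscaled : ∀ c ∈ Ioo (0 : ℝ) 1, c * y t ≤ x t := fun c hc => by
    refine image_le_of_deriv_right_lt_deriv_boundary' (f := fun s => c * y s) (a := 0) (b := t)
      (fun s hs => ((hy_deriv s hs.1).const_mul c).continuousAt.continuousWithinAt)
      (fun s hs => ((hy_deriv s hs.1).const_mul c).hasDerivWithinAt)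
      (by simp [hy, hx0])
      (fun s hs => (hx s hs.1).continuousWithinAt.mono Icc_subset_Ici_self)
      (fun s hs => (hx s hs.1).mono (Ici_subset_Ici.2 hs.1)) ?_ (right_mem_Icc.2 ht)
    intro s hs heq
    have hs1 : 0 < s + 1 := by linarith [hs.1]
    have hys := hy_nonneg s hs.1
    have hcot := neg_le_cot_pi_add_div_two (mul_nonneg hc.1.le hys)
      (mul_le_one₀ hc.2.le hys (hy_le s hs.1))
    have hdrift : c * (ε / (s + 1)) < ε / (s + 1) := mul_lt_of_lt_one_left (by positivity) hc.2
    have hdamp : 0 ≤ c * (y s / (s + 1)) := mul_nonneg hc.1.le (by positivity)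
    rw [← heq]
    linarith
  have hlim : Tendsto (fun c : ℝ => c * y t) (𝓝[<] 1) (𝓝 (1 * y t)) :=
    ((continuous_id.mul continuous_const).tendsto 1).mono_left nhdsWithin_le_nhds
  rw [one_mul] at hlim
  exact le_of_tendsto hlim
    (eventually_of_mem (Ioo_mem_nhdsLT zero_lt_one) hscaled)

lemma phi_two_zero (x : Fin 2 → ℝ) : phi x 0 = Real.cot ((x 0 - x 1) / 2) := by
  simp [phi, show (Finset.univ.erase 0 : Finset (Fin 2)) = {1} by decide]

lemma phi_two_one (x : Fin 2 → ℝ) : phi x 1 = Real.cot ((x 1 - x 0) / 2) := by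
  simp [phi, show (Finset.univ.erase 1 : Finset (Fin 2)) = {0} by decide]

lemma sub_pi_le_dGap (x : Fin 2 → ℝ) : x 1 - x 0 - π ≤ dGap x := by
  refine le_trans ?_ (le_ciSup (f := fun j : Fin 2 => |2 * π / (2 : ℕ) - gap x j|)
    (finite_range _).bddAbove 0)
  have hgap : gap x 0 = x 1 - x 0 := by simp [gap, nextVal]
  rw [hgap, Nat.cast_ofNat, mul_div_cancel_left₀ _ (two_ne_zero' ℝ)]
  linarith [neg_le_abs (π - (x 1 - x 0))]

lemma continuousOn_cot_s19 {f : ℝ → ℝ} {s : Set ℝ} (hf : ContinuousOn f s)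
    (h : ∀ t ∈ s, Real.sin (f t) ≠ 0) : ContinuousOn (fun t => Real.cot (f t)) s := by
  simp only [Real.cot_eq_cos_div_sin]
  exact (Real.continuous_cos.comp_continuousOn hf).div (Real.continuous_sin.comp_continuousOn hf) h

/-- A path in `𝒳₂` driven by the repulsive drift perturbed by `-ε / (t + 1)` in its first
coordinate is absolutely continuous. -/
lemma absCont_two_of_ode {ε : ℝ} {θ : ℝ → Fin 2 → ℝ}
    (hX : ∀ t ∈ Ici (0 : ℝ), θ t ∈ Xspace 2)
    (hode0 : ∀ t ∈ Ici (0 : ℝ),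
      HasDerivWithinAt (fun s => θ s 0)
        (2 * Real.cot ((θ t 0 - θ t 1) / 2) - ε / (t + 1)) (Ici 0) t)
    (hode1 : ∀ t ∈ Ici (0 : ℝ),
      HasDerivWithinAt (fun s => θ s 1)
        (2 * Real.cot ((θ t 1 - θ t 0) / 2)) (Ici 0) t) (T : ℝ) : AbsCont T θ := by
  have hc0 : ContinuousOn (fun s => θ s 0) (Ici 0) := fun t ht => (hode0 t ht).continuousWithinAt
  have hc1 : ContinuousOn (fun s => θ s 1) (Ici 0) := fun t ht => (hode1 t ht).continuousWithinAt
  have hsin : ∀ t ∈ Ici (0 : ℝ), 0 < Real.sin ((θ t 1 - θ t 0) / 2) := fun t ht => by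
    have hlt : θ t 0 < θ t 1 := (hX t ht).1 zero_lt_one
    have hlt' := (hX t ht).2 1 0
    exact Real.sin_pos_of_pos_of_lt_pi (by linarith) (by linarith)
  have hcot1 : ContinuousOn (fun t => Real.cot ((θ t 1 - θ t 0) / 2)) (Ici 0) :=
    continuousOn_cot_s19 ((hc1.sub hc0).div_const 2) fun t ht => (hsin t ht).ne'
  have hcot0 : ContinuousOn (fun t => Real.cot ((θ t 0 - θ t 1) / 2)) (Ici 0) :=
    continuousOn_cot_s19 ((hc0.sub hc1).div_const 2) fun t ht => by
      rw [show (θ t 0 - θ t 1) / 2 = -((θ t 1 - θ t 0) / 2) by ring, Real.sin_neg]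
      exact neg_ne_zero.2 (hsin t ht).ne'
  refine absCont_of_hasDerivWithinAt
    (v := fun t => ![2 * Real.cot ((θ t 0 - θ t 1) / 2) - ε / (t + 1),
      2 * Real.cot ((θ t 1 - θ t 0) / 2)])
    (Fin.forall_fin_two.2 ⟨hode0, hode1⟩) (Fin.forall_fin_two.2 ⟨?_, ?_⟩) T
  · refine (continuousOn_const.mul hcot0).sub (continuousOn_const.div (by fun_prop) fun t ht => ?_)
    have : (0 : ℝ) ≤ t := ht
    positivity
  · exact continuousOn_const.mul hcot1

/-- A two-particle finite-energy system with arbitrarily small energy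
`ε²/2` whose convergence to the equally spaced configuration is only polynomially
fast. -/
theorem finite_energy_slow_convergence_example
    (ε : ℝ) (hε : ε ∈ Ioo (0 : ℝ) (π / 2))
    (θ : ℝ → Fin 2 → ℝ)
    (hX : ∀ t ∈ Ici (0 : ℝ), θ t ∈ Xspace 2)
    (h00 : θ 0 0 = 0) (h01 : θ 0 1 = π)
    (hode0 : ∀ t ∈ Ici (0 : ℝ),
      HasDerivWithinAt (fun s => θ s 0)
        (2 * Real.cot ((θ t 0 - θ t 1) / 2) - ε / (t + 1)) (Ici 0) t)
    (hode1 : ∀ t ∈ Ici (0 : ℝ),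
      HasDerivWithinAt (fun s => θ s 1)
        (2 * Real.cot ((θ t 1 - θ t 0) / 2)) (Ici 0) t) :
    mEnergyInf 2 θ = ENNReal.ofReal (ε ^ 2 / 2) ∧
    ∀ t ∈ Ici (0 : ℝ),
      ε * (1 - Real.exp (-4 * t)) / (4 * (t + 1)) ≤ (θ t 1 - θ t 0) - π ∧
      0 ≤ ε * (1 - Real.exp (-4 * t)) / (4 * (t + 1)) ∧
      ε * (1 - Real.exp (-4 * t)) / (4 * (t + 1)) ≤ dGap (θ t) := by
  have habs := absCont_two_of_ode hX hode0 hode1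
  have hintegrand : ∀ s ∈ Ioi (0 : ℝ),
      ∑ j, (deriv (fun t => θ t j) s - 2 * phi (θ s) j) ^ 2 = (ε / (s + 1)) ^ 2 := fun s hs => by
    have hnhds := Ici_mem_nhds (mem_Ioi.1 hs)
    have hs0 : s ∈ Ici (0 : ℝ) := Ioi_subset_Ici_self hs
    rw [Fin.sum_univ_two, phi_two_zero, phi_two_one, ((hode0 s hs0).hasDerivAt hnhds).deriv,
      ((hode1 s hs0).hasDerivAt hnhds).deriv]
    ring
  have henergy : ∀ T : ℝ, 0 ≤ T →
      mEnergy 2 T θ = ENNReal.ofReal (ε ^ 2 / 2 * (1 - (T + 1)⁻¹)) := fun T hT => by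
    rw [mEnergy, if_pos (habs T), setLIntegral_congr_fun measurableSet_Ioc
      (fun s hs => congrArg ENNReal.ofReal (hintegrand s hs.1)), lintegral_sq_div_add_one ε hT,
      ← ENNReal.ofReal_mul (by norm_num)]
    congr 1
    ring
  refine ⟨le_antisymm (iSup_le fun T => ?_) ?_, fun t ht => ?_⟩
  · rcases le_or_gt 0 T with hT | hT
    · rw [henergy T hT]
      refine ENNReal.ofReal_le_ofReal (mul_le_of_le_one_right (by positivity) ?_)
      have : 0 ≤ (T + 1)⁻¹ := by positivity
      linarith
    · simp [mEnergy, habs T, Ioc_eq_empty_of_le hT.le]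
  · have hlim : Tendsto (fun T : ℝ => ε ^ 2 / 2 * (1 - (T + 1)⁻¹)) atTop
        (𝓝 (ε ^ 2 / 2 * (1 - 0))) :=
      ((tendsto_inv_atTop_zero.comp (tendsto_atTop_add_const_right _ 1 tendsto_id)).const_sub
        1).const_mul _
    rw [sub_zero, mul_one] at hlim
    refine le_of_tendsto (ENNReal.tendsto_ofReal hlim) ?_
    filter_upwards [eventually_ge_atTop 0] with T hT
    rw [← henergy T hT]
    exact le_iSup (fun T => mEnergy 2 T θ) T
  · have ht0 : 0 ≤ t := ht
    have hle : ε * (1 - Real.exp (-4 * t)) / (4 * (t + 1)) ≤ θ t 1 - θ t 0 - π := by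
      refine le_of_hasDerivWithinAt_cot (x := fun s => θ s 1 - θ s 0 - π) hε.1
        (by linarith [hε.2, Real.pi_le_four]) (by simp [h00, h01]) (fun s hs => ?_) ht0
      refine (((hode1 s hs).sub (hode0 s hs)).sub_const π).congr_deriv ?_
      have hodd : Real.cot ((θ s 0 - θ s 1) / 2) = -Real.cot ((θ s 1 - θ s 0) / 2) := by
        rw [show (θ s 0 - θ s 1) / 2 = -((θ s 1 - θ s 0) / 2) by ring]
        simp only [Real.cot_eq_cos_div_sin, Real.cos_neg, Real.sin_neg, div_neg]
      rw [hodd, add_sub_cancel]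
      ring
    have hexp : Real.exp (-4 * t) ≤ 1 := Real.exp_le_one_iff.2 (by linarith)
    exact ⟨hle, div_nonneg (mul_nonneg hε.1.le (by linarith)) (by linarith),
      hle.trans (sub_pi_le_dGap (θ t))⟩

end
end
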